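/- arXiv:1703.01384 — 8 statements merged into one kernel-verified Lean document; each statement's English description precedes it below -/
import Mathlib

section
/- Let n ≥ 1 be an integer and κ > 0, and set s(r) = sinh(κr)/κ. Let u : (0,∞) → ℝ be smooth and put w(r) = s(r)^{(n−1)/2} u(r). Then for every r > 0, ( u′(r)² − κ² ((n−1)/2)² u(r)² ) · s(r)^{n−1} = w′(r)² + ((n−1)(n−3)/(4 s(r)²)) w(r)² − d/dr( ((n−1)/2) (s′(r)/s(r)) w(r)² ). -/
/-!
With `h = a s'/s` and `w = s ^ a * u`, the product rule reads `s ^ a * u' = w' - h w`. Squaring and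
absorbing the cross term `2 h w w'` into `(h w²)'` leaves the potential `h' + h²` in front of `w²`.
For the warping function of the space form of constant sectional curvature `-K`, the equations
`s'' = K s` and `s'² = 1 + K s²` turn that potential into `K a² + a (a - 1) / s²`.
-/

section LogDeriv

variable {𝕜 : Type*} [NontriviallyNormedField 𝕜] {f g : 𝕜 → 𝕜} {x : 𝕜}

theorem sq_deriv_sub_mul (hf : DifferentiableAt 𝕜 f x) (hg : DifferentiableAt 𝕜 g x) :
    (deriv f x - g x * f x) ^ 2 = deriv f x ^ 2 + (deriv g x + g x ^ 2) * f x ^ 2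
      - deriv (fun y => g y * f y ^ 2) x := by
  have hgf : deriv (fun y => g y * f y ^ 2) x
      = deriv g x * f x ^ 2 + g x * (2 * f x * deriv f x) := by
    simpa using (hg.hasDerivAt.fun_mul (hf.hasDerivAt.fun_pow 2)).deriv
  rw [hgf]
  ring

theorem hasDerivAt_logDeriv {f'' : 𝕜} (hf : DifferentiableAt 𝕜 f x)
    (hf' : HasDerivAt (deriv f) f'' x) (hx : f x ≠ 0) :
    HasDerivAt (logDeriv f) (f'' / f x - logDeriv f x ^ 2) x := by
  refine (hf'.div hf.hasDerivAt hx).congr_deriv ?_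
  rw [logDeriv_apply]
  field_simp

end LogDeriv

section WarpedProduct

variable {s u : ℝ → ℝ} {r : ℝ}

theorem hasDerivAt_rpow_mul (a : ℝ) (hs : DifferentiableAt ℝ s r) (hr : s r ≠ 0)
    (hu : DifferentiableAt ℝ u r) :
    HasDerivAt (fun ρ => s ρ ^ a * u ρ)
      (s r ^ a * deriv u r + a * logDeriv s r * (s r ^ a * u r)) r := by
  refine ((hs.hasDerivAt.rpow_const (p := a) (.inl hr)).fun_mul hu.hasDerivAt).congr_deriv ?_
  rw [Real.rpow_sub_one hr, logDeriv_apply]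
  ring

theorem sq_rpow_mul_deriv {s'' : ℝ} (a : ℝ) (hs : DifferentiableAt ℝ s r)
    (hs' : HasDerivAt (deriv s) s'' r) (hr : s r ≠ 0) (hu : DifferentiableAt ℝ u r) :
    (s r ^ a * deriv u r) ^ 2 = deriv (fun ρ => s ρ ^ a * u ρ) r ^ 2
      + (a * (s'' / s r) + a * (a - 1) * logDeriv s r ^ 2) * (s r ^ a * u r) ^ 2
      - deriv (fun ρ => a * logDeriv s ρ * (s ρ ^ a * u ρ) ^ 2) r := by
  have hw := hasDerivAt_rpow_mul a hs hr hu
  have hh := (hasDerivAt_logDeriv hs hs' hr).const_mul a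
  have product_rule : s r ^ a * deriv u r
      = deriv (fun ρ => s ρ ^ a * u ρ) r - a * logDeriv s r * (s r ^ a * u r) := by
    rw [hw.deriv]
    ring
  rw [product_rule, sq_deriv_sub_mul hw.differentiableAt hh.differentiableAt, hh.deriv]
  ring

theorem stmt_1_general (d K : ℝ) (hs : DifferentiableAt ℝ s r)
    (hs' : HasDerivAt (deriv s) (K * s r) r) (hsq : deriv s r ^ 2 = 1 + K * s r ^ 2)
    (hr : 0 < s r) (hu : DifferentiableAt ℝ u r)
    {w : ℝ → ℝ} (hw : ∀ ρ, w ρ = s ρ ^ ((d - 1) / 2) * u ρ) :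
    (deriv u r ^ 2 - K * ((d - 1) / 2) ^ 2 * u r ^ 2) * s r ^ (d - 1)
    = deriv w r ^ 2 + ((d - 1) * (d - 3) / (4 * s r ^ 2)) * w r ^ 2
      - deriv (fun ρ => ((d - 1) / 2) * (deriv s ρ / s ρ) * w ρ ^ 2) r := by
  obtain rfl : w = fun ρ => s ρ ^ ((d - 1) / 2) * u ρ := funext hw
  have hpow : s r ^ (d - 1) = (s r ^ ((d - 1) / 2)) ^ 2 := by
    rw [← Real.rpow_mul_natCast hr.le]
    norm_num
  have hpotential : (d - 1) / 2 * (K * s r / s r)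
      + (d - 1) / 2 * ((d - 1) / 2 - 1) * (deriv s r / s r) ^ 2
      = K * ((d - 1) / 2) ^ 2 + (d - 1) * (d - 3) / (4 * s r ^ 2) := by
    rw [div_pow, hsq]
    field_simp
    ring
  have henergy := sq_rpow_mul_deriv ((d - 1) / 2) hs hs' hr.ne' hu
  simp only [logDeriv_apply, hpotential] at henergy
  rw [hpow]
  linear_combination henergy

end WarpedProduct

section Hyperbolic

variable {κ : ℝ}

theorem hasDerivAt_sinh_mul_div (hκ : κ ≠ 0) (r : ℝ) :
    HasDerivAt (fun ρ => Real.sinh (κ * ρ) / κ) (Real.cosh (κ * r)) r := by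
  simpa [hκ] using ((hasDerivAt_const_mul κ).sinh.div_const κ : HasDerivAt _ _ r)

theorem deriv_sinh_mul_div (hκ : κ ≠ 0) :
    deriv (fun ρ => Real.sinh (κ * ρ) / κ) = fun ρ => Real.cosh (κ * ρ) :=
  funext fun r => (hasDerivAt_sinh_mul_div hκ r).deriv

theorem hasDerivAt_deriv_sinh_mul_div (hκ : κ ≠ 0) (r : ℝ) :
    HasDerivAt (deriv fun ρ => Real.sinh (κ * ρ) / κ) (κ ^ 2 * (Real.sinh (κ * r) / κ)) r := by
  rw [deriv_sinh_mul_div hκ]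
  refine (hasDerivAt_const_mul κ).cosh.congr_deriv ?_
  field_simp

theorem sq_deriv_sinh_mul_div (hκ : κ ≠ 0) (r : ℝ) :
    deriv (fun ρ => Real.sinh (κ * ρ) / κ) r ^ 2 = 1 + κ ^ 2 * (Real.sinh (κ * r) / κ) ^ 2 := by
  rw [deriv_sinh_mul_div hκ, Real.cosh_sq']
  field_simp

end Hyperbolic

/-- Radial energy-density identity of Lemma 4.1 (eq. (4.4)): with `s(r) = sinh(κr)/κ`
and `w = s^{(n-1)/2} u`, one has
`(u'² - κ²((n-1)/2)² u²) s^{n-1}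
  = w'² + ((n-1)(n-3)/(4 s²)) w² - ∂_r( ((n-1)/2)(s'/s) w² )` on `(0,∞)`. -/
theorem stmt_1 (n : ℕ) (hn : 1 ≤ n) (κ : ℝ) (hκ : 0 < κ)
    (s : ℝ → ℝ) (hs : ∀ r, s r = Real.sinh (κ * r) / κ)
    (u : ℝ → ℝ) (hu : ContDiffOn ℝ (⊤ : ℕ∞) u (Set.Ioi 0))
    (w : ℝ → ℝ) (hw : ∀ ρ, w ρ = s ρ ^ (((n : ℝ) - 1) / 2) * u ρ)
    (r : ℝ) (hr : 0 < r) :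
    (deriv u r ^ 2 - κ ^ 2 * (((n : ℝ) - 1) / 2) ^ 2 * u r ^ 2) * s r ^ ((n : ℝ) - 1)
    = deriv w r ^ 2 + (((n : ℝ) - 1) * ((n : ℝ) - 3) / (4 * s r ^ 2)) * w r ^ 2
      - deriv (fun ρ => (((n : ℝ) - 1) / 2) * (deriv s ρ / s ρ) * w ρ ^ 2) r := by
  obtain rfl : s = fun ρ => Real.sinh (κ * ρ) / κ := funext hs
  exact stmt_1_general n (κ ^ 2) (hasDerivAt_sinh_mul_div hκ.ne' r).differentiableAt
    (hasDerivAt_deriv_sinh_mul_div hκ.ne' r) (sq_deriv_sinh_mul_div hκ.ne' r)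
    (div_pos (Real.sinh_pos_iff.mpr (mul_pos hκ hr)) hκ)
    ((hu.contDiffAt (Ioi_mem_nhds hr)).differentiableAt (by simp)) hw
end

section
/- Fix κ > 0 and λ ∈ ℂ with λ ≠ 0, and set s(r) = sinh(κr)/κ. Define f_0(r) = −e^{iλr}/(2iλ) and recursively f_{j+1}(r) = −(2π s(r))^{−1} f_j′(r) for r > 0. Then each f_j is smooth on (0,∞), and for every j ∈ ℕ and r > 0 one has −s(r)^{−2j} · d/dr( s(r)^{2j} f_j′(r) ) = ( j²κ² + λ² ) f_j(r). -/
/-!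
Write `Δₘ u = S⁻ᵐ (Sᵐ u')'` and `D u = S⁻¹ u'`. If `S'' = K S`, then `Δₘ u = S v' + (m + 1) S' v`
for `v = D u`, and differentiating once more gives the intertwining relation
`Δₘ₊₂ D = D Δₘ - (m + 1) K D`. So `D` sends an eigenfunction of `-Δₘ` with eigenvalue `ν` to one of
`-Δₘ₊₂` with eigenvalue `ν + (m + 1) K`. Starting from `-Δ₀ u = -u'' = μ u`, after `j` steps the
eigenvalue is `μ + (1 + 3 + ⋯ + (2 j - 1)) K = μ + j² K`.
-/

section RadialLaplacian

open Set
open scoped ContDiff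

variable {𝕜 𝔸 : Type*} [NontriviallyNormedField 𝕜] [NormedField 𝔸] [NormedAlgebra 𝕜 𝔸]

/-- The radial part `u ↦ S⁻ᵐ (Sᵐ u')'` of the Laplacian of the warped metric `dr² + S(r)² g` on an
`(m + 1)`-dimensional space. It has the junk value `0` where `S` vanishes and `m ≠ 0`. -/
noncomputable def radialLaplacian (S : 𝕜 → 𝔸) (m : ℕ) (u : 𝕜 → 𝔸) (r : 𝕜) : 𝔸 :=
  (S r ^ m)⁻¹ * deriv (fun ρ => S ρ ^ m * deriv u ρ) r

lemma radialLaplacian_zero (S u : 𝕜 → 𝔸) : radialLaplacian S 0 u = deriv (deriv u) := by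
  ext r
  simp [radialLaplacian]

lemma radialLaplacian_eq_deriv_deriv_add {S u : 𝕜 → 𝔸} {r : 𝕜} (m : ℕ)
    (hS : DifferentiableAt 𝕜 S r) (hSr : S r ≠ 0) (hu : DifferentiableAt 𝕜 (deriv u) r) :
    radialLaplacian S m u r = deriv (deriv u) r + m * (deriv S r / S r) * deriv u r := by
  have hderiv : deriv (fun ρ => S ρ ^ m * deriv u ρ) r =
      m * S r ^ (m - 1) * deriv S r * deriv u r + S r ^ m * deriv (deriv u) r :=
    ((hS.hasDerivAt.fun_pow m).fun_mul hu.hasDerivAt).deriv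
  rw [radialLaplacian, hderiv]
  cases m with
  | zero => simp
  | succ m =>
    rw [Nat.add_sub_cancel]
    field_simp
    ring

variable {U : Set 𝕜} {S u v : 𝕜 → 𝔸} {c K ν : 𝔸}

lemma radialLaplacian_of_deriv_eqOn (m : ℕ) (hU : IsOpen U) (hS : DifferentiableOn 𝕜 S U)
    (hS0 : ∀ r ∈ U, S r ≠ 0) (hv : DifferentiableOn 𝕜 v U)
    (huv : EqOn (deriv u) (fun r => c * (S r * v r)) U) :
    EqOn (radialLaplacian S m u)
      (fun r => c * (S r * deriv v r + (m + 1) * (deriv S r * v r))) U := by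
  intro r hr
  have hSr := hS.differentiableAt (hU.mem_nhds hr)
  have hSv := (hSr.hasDerivAt.fun_mul
    (hv.differentiableAt (hU.mem_nhds hr)).hasDerivAt).const_mul c
  have hu := hSv.congr_of_eventuallyEq (huv.eventuallyEq_of_mem (hU.mem_nhds hr))
  rw [radialLaplacian_eq_deriv_deriv_add m hSr (hS0 r hr) hu.differentiableAt, hu.deriv, huv hr]
  field_simp [hS0 r hr]
  ring

/-- The intertwining relation `D Δₘ = Δₘ₊₂ D + (m + 1) K D`, for `v` proportional to `D u`. -/
lemma deriv_radialLaplacian_of_deriv_eqOn (m : ℕ) (hU : IsOpen U) (hS : ContDiffOn 𝕜 2 S U)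
    (hS0 : ∀ r ∈ U, S r ≠ 0) (hS2 : ∀ r ∈ U, deriv (deriv S) r = K * S r)
    (hv : ContDiffOn 𝕜 2 v U) (huv : EqOn (deriv u) (fun r => c * (S r * v r)) U) :
    EqOn (deriv (radialLaplacian S m u))
      (fun r => c * (S r * (radialLaplacian S (m + 2) v r + (m + 1) * K * v r))) U := by
  intro r hr
  have hasDerivAt_self_and_deriv {w : 𝕜 → 𝔸} (hw : ContDiffOn 𝕜 2 w U) :
      HasDerivAt w (deriv w r) r ∧ HasDerivAt (deriv w) (deriv (deriv w) r) r :=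
    ⟨((hw.differentiableOn two_ne_zero).differentiableAt (hU.mem_nhds hr)).hasDerivAt,
      (((hw.deriv_of_isOpen (m := 1) hU (by norm_num)).differentiableOn
        one_ne_zero).differentiableAt (hU.mem_nhds hr)).hasDerivAt⟩
  obtain ⟨hS', hS''⟩ := hasDerivAt_self_and_deriv hS
  obtain ⟨hv', hv''⟩ := hasDerivAt_self_and_deriv hv
  have hΔu := radialLaplacian_of_deriv_eqOn m hU (hS.differentiableOn two_ne_zero) hS0
    (hv.differentiableOn two_ne_zero) huv
  rw [hΔu.deriv hU hr,
    (((hS'.fun_mul hv'').fun_add ((hS''.fun_mul hv').const_mul (m + 1 : 𝔸))).const_mul c).deriv,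
    hS2 r hr]
  simp only [radialLaplacian_eq_deriv_deriv_add (m + 2) hS'.differentiableAt (hS0 r hr)
    hv''.differentiableAt]
  field_simp [hS0 r hr]
  push_cast
  ring

lemma neg_radialLaplacian_add_two_eq_mul {m : ℕ} (hU : IsOpen U) (hS : ContDiffOn 𝕜 2 S U)
    (hS0 : ∀ r ∈ U, S r ≠ 0) (hS2 : ∀ r ∈ U, deriv (deriv S) r = K * S r) (hc : c ≠ 0)
    (hv : ContDiffOn 𝕜 2 v U) (huv : EqOn (deriv u) (fun r => c * (S r * v r)) U)
    (hu : ∀ r ∈ U, -radialLaplacian S m u r = ν * u r) :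
    ∀ r ∈ U, -radialLaplacian S (m + 2) v r = (ν + (m + 1) * K) * v r := by
  intro r hr
  have hΔu : EqOn (radialLaplacian S m u) (fun ρ => -ν * u ρ) U := fun ρ hρ => by
    simp only [neg_mul, ← hu ρ hρ, neg_neg]
  have hderiv : c * (S r * (radialLaplacian S (m + 2) v r + (m + 1) * K * v r)) =
      -ν * (c * (S r * v r)) :=
    calc
      _ = deriv (radialLaplacian S m u) r :=
        (deriv_radialLaplacian_of_deriv_eqOn m hU hS hS0 hS2 hv huv hr).symm
      _ = -ν * deriv u r := by rw [hΔu.deriv hU hr, deriv_const_mul_field]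
      _ = -ν * (c * (S r * v r)) := by rw [huv hr]
  apply mul_left_cancel₀ (mul_ne_zero hc (hS0 r hr))
  linear_combination -hderiv

variable {f : ℕ → 𝕜 → 𝔸}

lemma contDiffOn_of_succ_eq_inv_mul_deriv (hU : IsOpen U)
    (hS : ContDiffOn 𝕜 ∞ S U) (hS0 : ∀ r ∈ U, S r ≠ 0) (hf0 : ContDiffOn 𝕜 ∞ (f 0) U)
    (hfrec : ∀ j, ∀ r ∈ U, f (j + 1) r = -(c * S r)⁻¹ * deriv (f j) r) (j : ℕ) :
    ContDiffOn 𝕜 ∞ (f j) U := by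
  induction j with
  | zero => exact hf0
  | succ j ih =>
    have hinv : ContDiffOn 𝕜 ∞ (fun r => (c * S r)⁻¹) U := by
      simp only [mul_inv]
      exact contDiffOn_const.mul (hS.inv hS0)
    exact (hinv.neg.mul (ih.deriv_of_isOpen hU (by simp))).congr (hfrec j)

/-- The hyperbolic, Euclidean and spherical cases are `K = κ²`, `0` and `-κ²`. -/
theorem stmt_4_general {μ : 𝔸} (hU : IsOpen U) (hc : c ≠ 0)
    (hS : ContDiffOn 𝕜 ∞ S U) (hS0 : ∀ r ∈ U, S r ≠ 0)
    (hS2 : ∀ r ∈ U, deriv (deriv S) r = K * S r)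
    (hf0 : ContDiffOn 𝕜 ∞ (f 0) U) (hf02 : ∀ r ∈ U, -deriv (deriv (f 0)) r = μ * f 0 r)
    (hfrec : ∀ j, ∀ r ∈ U, f (j + 1) r = -(c * S r)⁻¹ * deriv (f j) r) :
    (∀ j, ContDiffOn 𝕜 ∞ (f j) U) ∧
    ∀ (j : ℕ), ∀ r ∈ U, -radialLaplacian S (2 * j) (f j) r = ((j : 𝔸) ^ 2 * K + μ) * f j r := by
  have hf := contDiffOn_of_succ_eq_inv_mul_deriv hU hS hS0 hf0 hfrec
  refine ⟨hf, fun j => ?_⟩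
  induction j with
  | zero => simpa [radialLaplacian_zero] using hf02
  | succ j ih =>
    have hderiv : EqOn (deriv (f j)) (fun r => -c * (S r * f (j + 1) r)) U := fun r hr => by
      simp only [hfrec j r hr]
      field_simp [hc, hS0 r hr]
    have two_le : (2 : WithTop ℕ∞) ≤ ∞ := WithTop.coe_le_coe.2 le_top
    intro r hr
    have hstep := neg_radialLaplacian_add_two_eq_mul hU (hS.of_le two_le) hS0 hS2
      (neg_ne_zero.2 hc) ((hf (j + 1)).of_le two_le) hderiv ih r hr
    rw [mul_add_one, hstep]
    push_cast
    ring

end RadialLaplacian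

section HyperbolicProfile

variable {κ : ℝ}

lemma contDiff_ofReal_sinh_mul_div {n : WithTop ℕ∞} :
    ContDiff ℝ n fun r => ((Real.sinh (κ * r) / κ : ℝ) : ℂ) :=
  Complex.ofRealCLM.contDiff.comp (by fun_prop : ContDiff ℝ n fun r => Real.sinh (κ * r) / κ)

lemma ofReal_sinh_mul_div_ne_zero (hκ : κ ≠ 0) {r : ℝ} (hr : r ≠ 0) :
    ((Real.sinh (κ * r) / κ : ℝ) : ℂ) ≠ 0 :=
  Complex.ofReal_ne_zero.2 (div_ne_zero (Real.sinh_ne_zero.2 (mul_ne_zero hκ hr)) hκ)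

lemma deriv_deriv_ofReal_sinh_mul_div (r : ℝ) :
    deriv (deriv fun ρ => ((Real.sinh (κ * ρ) / κ : ℝ) : ℂ)) r =
      (κ : ℂ) ^ 2 * (Real.sinh (κ * r) / κ : ℝ) := by
  have hsinh (ρ : ℝ) : HasDerivAt (fun x => ((Real.sinh (κ * x) / κ : ℝ) : ℂ))
      (Real.cosh (κ * ρ) * (κ / κ) : ℝ) ρ := by
    convert (((hasDerivAt_id' ρ).const_mul κ).sinh.div_const κ).ofReal_comp using 2
    ring
  have hcosh : HasDerivAt (fun x => ((Real.cosh (κ * x) * (κ / κ) : ℝ) : ℂ))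
      (κ ^ 2 * (Real.sinh (κ * r) / κ) : ℝ) r := by
    convert (((hasDerivAt_id' r).const_mul κ).cosh.mul_const (κ / κ)).ofReal_comp using 2
    ring
  rw [funext fun ρ => (hsinh ρ).deriv, hcosh.deriv, Complex.ofReal_mul,
    Complex.ofReal_pow]

end HyperbolicProfile

section Exponential

variable {a b : ℂ}

lemma contDiff_neg_cexp_mul_ofReal_div {n : WithTop ℕ∞} :
    ContDiff ℝ n fun r : ℝ => -Complex.exp (a * r) / b :=
  (contDiff_const.mul Complex.ofRealCLM.contDiff).cexp.neg.div_const b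

lemma deriv_deriv_neg_cexp_mul_ofReal_div (r : ℝ) :
    deriv (deriv fun ρ : ℝ => -Complex.exp (a * ρ) / b) r =
      a ^ 2 * (-Complex.exp (a * r) / b) := by
  have hexp (ρ : ℝ) :
      HasDerivAt (fun x : ℝ => -Complex.exp (a * x) / b) (a * (-Complex.exp (a * ρ) / b)) ρ := by
    convert (((hasDerivAt_id' (ρ : ℂ)).const_mul a).cexp.fun_neg.div_const b).comp_ofReal using 1
    ring
  rw [funext fun ρ => (hexp ρ).deriv, ((hexp r).const_mul a).deriv]
  ring

end Exponential

open Complex in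
/-- Lemma 7.1: the functions `f_0(r) = -e^{iλr}/(2iλ)`,
`f_{j+1}(r) = -(2π s(r))⁻¹ f_j'(r)`, with `s(r) = sinh(κr)/κ`, are smooth on `(0,∞)`
and satisfy `-s^{-2j}(s^{2j} f_j')' = (j²κ² + λ²) f_j` there. -/
theorem stmt_4 (κ : ℝ) (hκ : 0 < κ) (lam : ℂ) (hlam : lam ≠ 0)
    (s : ℝ → ℝ) (hs : ∀ r, s r = Real.sinh (κ * r) / κ)
    (f : ℕ → ℝ → ℂ)
    (hf0 : ∀ r : ℝ, f 0 r = -Complex.exp (I * lam * r) / (2 * I * lam))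
    (hfrec : ∀ (j : ℕ) (r : ℝ), f (j + 1) r = -(2 * Real.pi * s r : ℂ)⁻¹ * deriv (f j) r) :
    (∀ j : ℕ, ContDiffOn ℝ (⊤ : ℕ∞) (f j) (Set.Ioi 0)) ∧
    (∀ (j : ℕ) (r : ℝ), 0 < r →
      -(((s r : ℂ)) ^ (2 * j))⁻¹ *
          deriv (fun ρ => ((s ρ : ℂ)) ^ (2 * j) * deriv (f j) ρ) r
        = ((j : ℂ) ^ 2 * (κ : ℂ) ^ 2 + lam ^ 2) * f j r) := by
  obtain rfl : s = fun r => Real.sinh (κ * r) / κ := funext hs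
  have hf02 (r : ℝ) : -deriv (deriv (f 0)) r = lam ^ 2 * f 0 r := by
    rw [funext hf0, deriv_deriv_neg_cexp_mul_ofReal_div, mul_pow, I_sq]
    ring
  simpa only [radialLaplacian, ← neg_mul, Set.mem_Ioi] using
    stmt_4_general isOpen_Ioi (mod_cast Real.two_pi_pos.ne' : (2 * Real.pi : ℂ) ≠ 0)
      contDiff_ofReal_sinh_mul_div.contDiffOn
      (fun r hr => ofReal_sinh_mul_div_ne_zero hκ.ne' (ne_of_gt hr))
      (fun r _ => deriv_deriv_ofReal_sinh_mul_div r)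
      (funext hf0 ▸ contDiff_neg_cexp_mul_ofReal_div.contDiffOn) (fun r _ => hf02 r)
      fun j r _ => hfrec j r
end

section
/- Let k ≥ 1 be an integer, κ > 0 and σ ∈ ℂ. Define the polynomial v(x) = Σ_{j=0}^{k−1} ((x−1)^j/(2^j j!)) · ∏_{l=1}^{j}( k(k−1) − l(l−1) ) · ∏_{m=j+1}^{k−1}( m − iκ^{−1}σ ), where empty products equal 1. Then for every x ∈ ℝ, d/dx( (1−x²) v′(x) ) + 2 i κ^{−1} σ v′(x) + k(k−1) v(x) = 0. -/
/-!
In powers of `X - 1` the operator `p ↦ ((1 - X²) p′)′ + 2 s p′` is bidiagonal: it sends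
`(X - 1) ^ j` to `2 j (s - j) (X - 1) ^ (j - 1) - j (j + 1) (X - 1) ^ j`. If the
coefficients satisfy `2 (j + 1) (j + 1 - s) a (j + 1) = (μ - j (j + 1)) a j`, applying the operator
plus `μ` to a sum up to degree `n` therefore telescopes to `(μ - n (n + 1)) a n (X - 1) ^ n`, which
vanishes for `μ = n (n + 1)`; here `n = k - 1`.
-/

section PolynomialSolution

open Polynomial Finset

section CommRing

variable {R : Type*} [CommRing R]

/-- The Legendre operator with drift, `p ↦ ((1 - X²) p′)′ + 2 s p′`, as a linear map on polynomials.
It is the Jacobi operator with parameters `(α, β) = (-s, s)`. -/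
noncomputable def driftLegendre (s : R) : R[X] →ₗ[R] R[X] :=
  derivative ∘ₗ LinearMap.mulLeft R (1 - X ^ 2) ∘ₗ derivative + (2 * s) • derivative

theorem driftLegendre_apply (s : R) (p : R[X]) :
    driftLegendre s p = derivative ((1 - X ^ 2) * derivative p) + (2 * s) • derivative p :=
  rfl

theorem driftLegendre_X_sub_one_pow (s : R) (j : ℕ) :
    driftLegendre s ((X - 1) ^ j) =
      (2 * j * (s - j)) • (X - 1) ^ (j - 1) - ((j : R) * (j + 1)) • (X - 1) ^ j := by
  have hderiv (i : ℕ) : derivative ((X - 1 : R[X]) ^ i) =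
      (i : R[X]) * (X - 1) ^ (i - 1) := by
    simp [derivative_pow]
  have hfactor : (1 - X ^ 2 : R[X]) * derivative ((X - 1) ^ j) =
      -((j : R[X]) * ((X - 1) ^ (j + 1) + 2 * (X - 1) ^ j)) := by
    rw [hderiv]
    cases j with
    | zero => simp
    | succ j =>
      rw [add_tsub_cancel_right]
      ring
  rw [driftLegendre_apply, hfactor]
  simp only [derivative_neg, derivative_mul, derivative_natCast, derivative_ofNat, hderiv,
    zero_mul, zero_add, add_tsub_cancel_right, smul_eq_C_mul, map_mul, map_sub, map_add,
    map_natCast, map_ofNat, map_one, Nat.cast_add, Nat.cast_one]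
  ring

theorem driftLegendre_sum_add_smul {s μ : R} {a : ℕ → R} {n : ℕ}
    (ha : ∀ j < n, 2 * (j + 1) * (j + 1 - s) * a (j + 1) = (μ - j * (j + 1)) * a j) :
    driftLegendre s (∑ j ∈ range (n + 1), a j • (X - 1) ^ j) +
        μ • ∑ j ∈ range (n + 1), a j • (X - 1) ^ j =
      ((μ - n * (n + 1)) * a n) • (X - 1) ^ n := by
  induction n with
  | zero => simp [driftLegendre_apply, smul_smul]
  | succ n ih =>
    have hprev := ih fun j hj => ha j (hj.trans n.lt_succ_self)
    rw [sum_range_succ, map_add, smul_add, add_add_add_comm, hprev, ← ha n n.lt_succ_self,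
      map_smul, driftLegendre_X_sub_one_pow]
    push_cast
    module

end CommRing

section Field

variable {F : Type*} [Field F]

/-- The coefficient of `(X - 1) ^ j` in the Frobenius solution of
`((1 - X²) p′)′ + 2 s p′ + μ p = 0` at the singular point `1`. The normalization by
`∏ m ∈ Icc 1 n, (m - s)` at `j = 0` avoids dividing by `m - s`, which vanishes when `s` is one of
`1, …, n`. -/
noncomputable def frobeniusCoeff (s μ : F) (n j : ℕ) : F :=
  (∏ l ∈ Icc 1 j, (μ - l * (l - 1))) * (∏ m ∈ Icc (j + 1) n, (m - s)) / (2 ^ j * j.factorial)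

theorem frobeniusCoeff_succ [CharZero F] (s μ : F) {n j : ℕ} (hj : j < n) :
    2 * (j + 1) * (j + 1 - s) * frobeniusCoeff s μ n (j + 1) =
      (μ - j * (j + 1)) * frobeniusCoeff s μ n j := by
  have hlower : ∏ l ∈ Icc 1 (j + 1), (μ - (l : F) * (l - 1)) =
      (∏ l ∈ Icc 1 j, (μ - (l : F) * (l - 1))) * (μ - (j + 1) * j) := by
    rw [prod_Icc_succ_top (by omega)]
    push_cast
    rw [add_sub_cancel_right]
  have hupper : ∏ m ∈ Icc (j + 1) n, ((m : F) - s) =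
      (j + 1 - s) * ∏ m ∈ Icc (j + 2) n, ((m : F) - s) := by
    rw [← insert_Icc_add_one_left_eq_Icc (Nat.succ_le_of_lt hj), prod_insert (by simp)]
    push_cast
    rfl
  have hj_ne : (j : F) + 1 ≠ 0 := j.cast_add_one_ne_zero
  have hfact_ne : (j.factorial : F) ≠ 0 := Nat.cast_ne_zero.mpr j.factorial_ne_zero
  rw [frobeniusCoeff, frobeniusCoeff, hlower, hupper, Nat.factorial_succ]
  push_cast
  field_simp
  ring

/-- The Frobenius solution at `1` of `((1 - X²) p′)′ + 2 s p′ + μ p = 0`, truncated at degree `n`.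
For `μ = n (n + 1)` it is `n!` times the Jacobi polynomial of degree `n` with parameters
`(-s, s)`. -/
noncomputable def truncatedFrobenius (s μ : F) (n : ℕ) : F[X] :=
  ∑ j ∈ range (n + 1), frobeniusCoeff s μ n j • (X - 1) ^ j

theorem eval_truncatedFrobenius (s μ : F) (n : ℕ) (x : F) :
    (truncatedFrobenius s μ n).eval x = ∑ j ∈ range (n + 1),
      (x - 1) ^ j / (2 ^ j * j.factorial) * (∏ l ∈ Icc 1 j, (μ - l * (l - 1))) *
        ∏ m ∈ Icc (j + 1) n, (m - s) := by
  simp only [truncatedFrobenius, frobeniusCoeff, eval_finsetSum, eval_smul, eval_pow, eval_sub,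
    eval_X, eval_one, smul_eq_mul]
  exact sum_congr rfl fun j _ => by ring

theorem driftLegendre_truncatedFrobenius_add_smul [CharZero F] (s μ : F) (n : ℕ) :
    driftLegendre s (truncatedFrobenius s μ n) + μ • truncatedFrobenius s μ n =
      ((μ - n * (n + 1)) * frobeniusCoeff s μ n n) • (X - 1) ^ n :=
  driftLegendre_sum_add_smul fun _ hj => frobeniusCoeff_succ s μ hj

end Field

theorem deriv_eval_ofReal (p : ℂ[X]) :
    deriv (fun t : ℝ => p.eval (t : ℂ)) = fun t : ℝ => (derivative p).eval (t : ℂ) :=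
  funext fun t => (p.hasDerivAt (t : ℂ)).comp_ofReal.deriv

theorem eval_driftLegendre_ofReal (s : ℂ) (p : ℂ[X]) (x : ℝ) :
    (driftLegendre s p).eval (x : ℂ) =
      deriv (fun t : ℝ => (1 - (t : ℂ) ^ 2) * deriv (fun u : ℝ => p.eval (u : ℂ)) t) x +
        2 * s * deriv (fun t : ℝ => p.eval (t : ℂ)) x := by
  have hdiv : (fun t : ℝ => (1 - (t : ℂ) ^ 2) * (derivative p).eval (t : ℂ)) =
      fun t : ℝ => ((1 - X ^ 2) * derivative p).eval (t : ℂ) := by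
    simp
  rw [deriv_eval_ofReal p, hdiv, deriv_eval_ofReal, driftLegendre_apply, eval_add, eval_smul,
    smul_eq_mul]

end PolynomialSolution

open Complex Finset in
/-- Section 2: the explicit polynomial
`v(x) = Σ_{j=0}^{k-1} ((x-1)^j/(2^j j!)) ∏_{l=1}^{j}(k(k-1)-l(l-1)) ∏_{m=j+1}^{k-1}(m-iκ⁻¹σ)`
solves `((1-x²)v')' + 2iκ⁻¹σ v' + k(k-1) v = 0`. -/
theorem stmt_8 (k : ℕ) (hk : 1 ≤ k) (κ : ℝ) (hκ : 0 < κ) (σ : ℂ)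
    (v : ℝ → ℂ)
    (hv : ∀ x : ℝ, v x = ∑ j ∈ range k,
      (((x : ℂ) - 1) ^ j / (2 ^ j * (Nat.factorial j : ℂ))) *
        (∏ l ∈ Icc 1 j, ((k : ℂ) * ((k : ℂ) - 1) - (l : ℂ) * ((l : ℂ) - 1))) *
        (∏ m ∈ Icc (j + 1) (k - 1), ((m : ℂ) - I * (κ : ℂ)⁻¹ * σ))) :
    ∀ x : ℝ,
      deriv (fun t : ℝ => (1 - (t : ℂ) ^ 2) * deriv v t) x
        + 2 * I * (κ : ℂ)⁻¹ * σ * deriv v x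
        + (k : ℂ) * ((k : ℂ) - 1) * v x = 0 := by
  intro x
  obtain ⟨n, rfl⟩ := Nat.exists_eq_add_of_le' hk
  set μ : ℂ := ((n + 1 : ℕ) : ℂ) * (((n + 1 : ℕ) : ℂ) - 1) with hμ
  set s : ℂ := I * (κ : ℂ)⁻¹ * σ with hs
  let p := truncatedFrobenius s μ n
  have hvp : v = fun t : ℝ => p.eval (t : ℂ) :=
    funext fun t => (hv t).trans (eval_truncatedFrobenius s μ n t).symm
  have hterminates : μ - n * (n + 1) = 0 := by
    rw [hμ]
    push_cast
    ring
  have hode : driftLegendre s p + μ • p = 0 := by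
    rw [driftLegendre_truncatedFrobenius_add_smul, hterminates, zero_mul, zero_smul]
  have hode_x := congrArg (Polynomial.eval (x : ℂ)) hode
  rw [Polynomial.eval_add, eval_driftLegendre_ofReal, Polynomial.eval_smul, smul_eq_mul,
    Polynomial.eval_zero] at hode_x
  rw [hvp, ← hode_x, hs]
  ring
end

section
/- Let k ≥ 1 be an integer, κ > 0 and σ ∈ ℂ. Define u_{2k+1}(r;σ) = e^{irσ} Σ_{j=0}^{k−1} ((coth(κr)−1)^j/(2^j j!)) · ∏_{l=1}^{j}( k(k−1) − l(l−1) ) · ∏_{m=j+1}^{k−1}( m − iκ^{−1}σ ), where empty products equal 1. Then for every r > 0, −∂_r² u_{2k+1}(r;σ) + k(k−1) (κ²/sinh²(κr)) u_{2k+1}(r;σ) − σ² u_{2k+1}(r;σ) = 0. -/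
/-!
The substitution `x = coth (κr) - 1` satisfies `x' = -κ x (x + 2)` and `1 / sinh² (κr) = x (x + 2)`.
Writing `u = e^{irσ} P(x)` and `s = iσ/κ`, the radial equation becomes `κ² x (x + 2)` times the
hypergeometric equation `(x (x + 2) P')' = 2 s P' + k (k - 1) P`. On coefficients this is a two-term
recurrence, which terminates because `k (k - 1) - j (j + 1)` vanishes at `j = k - 1`.
-/

open Polynomial
open scoped Topology

section OutgoingPolynomial

variable {K : Type*} [Field K]

/-- The coefficient of `x ^ j`, for `j < k`, in the amplitude `P` of the outgoing solution
`e^{irσ} P(coth (κr) - 1)`, with `s = iκ⁻¹σ`. -/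
def outgoingCoeff (k : ℕ) (s : K) (j : ℕ) : K :=
  (∏ l ∈ Finset.Icc 1 j, ((k : K) * (k - 1) - l * (l - 1))) *
    (∏ m ∈ Finset.Icc (j + 1) (k - 1), ((m : K) - s)) / (2 ^ j * (j.factorial : K))

/-- The amplitude of the outgoing solution, as a polynomial in `x = coth (κr) - 1`, with
`s = iκ⁻¹σ`. -/
noncomputable def outgoingPoly (k : ℕ) (s : K) : K[X] :=
  ∑ j ∈ Finset.range k, monomial j (outgoingCoeff k s j)

theorem coeff_outgoingPoly (k : ℕ) (s : K) (j : ℕ) :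
    (outgoingPoly k s).coeff j = if j < k then outgoingCoeff k s j else 0 := by
  simp [outgoingPoly, coeff_monomial]

variable [CharZero K]

theorem outgoingCoeff_succ {k j : ℕ} (hj : j + 1 < k) (s : K) :
    2 * ((j : K) + 1) * (j + 1 - s) * outgoingCoeff k s (j + 1) =
      (k * (k - 1) - (j + 1) * j) * outgoingCoeff k s j := by
  have hfact : (j.factorial : K) ≠ 0 := Nat.cast_ne_zero.2 j.factorial_ne_zero
  have hsucc : (j : K) + 1 ≠ 0 := Nat.cast_add_one_ne_zero j
  have split_first : ∏ m ∈ Finset.Icc (j + 1) (k - 1), ((m : K) - s) =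
      (j + 1 - s) * ∏ m ∈ Finset.Icc (j + 1 + 1) (k - 1), ((m : K) - s) := by
    rw [← Finset.mul_prod_Ioc_eq_prod_Icc (by lia), ← Finset.Icc_add_one_left_eq_Ioc,
      Nat.cast_add_one]
  rw [outgoingCoeff, outgoingCoeff, Finset.prod_Icc_succ_top (by lia), split_first,
    Nat.factorial_succ]
  push_cast
  field_simp
  ring

theorem coeff_outgoingPoly_succ (k : ℕ) (s : K) (j : ℕ) :
    2 * ((j : K) + 1) * (j + 1 - s) * (outgoingPoly k s).coeff (j + 1) =
      (k * (k - 1) - (j + 1) * j) * (outgoingPoly k s).coeff j := by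
  simp only [coeff_outgoingPoly]
  rcases lt_trichotomy (j + 1) k with hlt | rfl | hgt
  · rw [if_pos hlt, if_pos (by lia), outgoingCoeff_succ hlt]
  · rw [if_neg (lt_irrefl _)]
    push_cast
    ring
  · rw [if_neg (by lia), if_neg (by lia), mul_zero, mul_zero]

theorem derivative_mul_derivative_outgoingPoly (k : ℕ) (s : K) :
    derivative (X * (X + 2) * derivative (outgoingPoly k s)) =
      C (2 * s) * derivative (outgoingPoly k s) + C ((k : K) * (k - 1)) * outgoingPoly k s := by
  have expand (P : K[X]) : X * (X + 2) * derivative P =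
      X * (X * derivative P) + C 2 * (X * derivative P) := by
    rw [C_ofNat]
    ring
  ext j
  have recurrence := coeff_outgoingPoly_succ k s j
  rw [expand]
  cases j with
  | zero =>
    simp only [coeff_add, coeff_derivative, coeff_C_mul, coeff_X_mul, coeff_X_mul_zero]
    push_cast at recurrence ⊢
    linear_combination recurrence
  | succ j =>
    simp only [coeff_add, coeff_derivative, coeff_C_mul, coeff_X_mul]
    push_cast at recurrence ⊢
    linear_combination recurrence

/- By `deriv_deriv_mul_eval`, the left-hand side evaluated at `x = coth (κr) - 1` is
`e^{-irσ} ∂ᵣ² (e^{irσ} P(x))`, since `κs = iσ` and `x' = -κ x (x + 2)`. -/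
theorem radialOperator_outgoingPoly (k : ℕ) (κ s : K) :
    C ((κ * s) ^ 2) * outgoingPoly k s + C (-κ) * (X * (X + 2)) *
        (C (2 * (κ * s)) * derivative (outgoingPoly k s) +
          derivative (C (-κ) * (X * (X + 2)) * derivative (outgoingPoly k s))) =
      C (κ ^ 2) * (C ((k : K) * (k - 1)) * (X * (X + 2)) + C (s ^ 2)) * outgoingPoly k s := by
  rw [mul_assoc (C (-κ)) (X * (X + 2)) (derivative _), derivative_C_mul,
    derivative_mul_derivative_outgoingPoly]
  simp only [C_mul, C_pow, C_neg]
  ring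

end OutgoingPolynomial

section ExponentialTimesPolynomial

variable {𝕜 F : Type*} [NontriviallyNormedField 𝕜] [NontriviallyNormedField F] [NormedAlgebra 𝕜 F]

theorem hasDerivAt_const_mul_algebraMap (a : F) (r : 𝕜) :
    HasDerivAt (fun t : 𝕜 ↦ a * algebraMap 𝕜 F t) a r := by
  simpa using ((algebraMapCLM 𝕜 F).hasDerivAt (x := r)).const_mul a

variable {e x : 𝕜 → F} {a : F} {Q : F[X]} {r : 𝕜}

theorem hasDerivAt_mul_eval (P : F[X]) (he : HasDerivAt e (a * e r) r)
    (hx : HasDerivAt x (Q.eval (x r)) r) :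
    HasDerivAt (fun t ↦ e t * P.eval (x t))
      (e r * (C a * P + Q * derivative P).eval (x r)) r := by
  refine (he.mul ((P.hasDerivAt (x r)).comp r hx)).congr_deriv ?_
  simp only [Function.comp_apply, eval_add, eval_mul, eval_C]
  ring

theorem deriv_deriv_mul_eval (P : F[X]) (he : ∀ᶠ t in 𝓝 r, HasDerivAt e (a * e t) t)
    (hx : ∀ᶠ t in 𝓝 r, HasDerivAt x (Q.eval (x t)) t) :
    deriv (deriv fun t ↦ e t * P.eval (x t)) r =
      e r * (C (a ^ 2) * P + Q * (C (2 * a) * derivative P + derivative (Q * derivative P))).eval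
        (x r) := by
  have first : deriv (fun t ↦ e t * P.eval (x t)) =ᶠ[𝓝 r]
      fun t ↦ e t * (C a * P + Q * derivative P).eval (x t) := by
    filter_upwards [he, hx] with t het hxt using (hasDerivAt_mul_eval P het hxt).deriv
  rw [first.deriv_eq, (hasDerivAt_mul_eval _ he.self_of_nhds hx.self_of_nhds).deriv]
  simp only [derivative_add, derivative_mul, derivative_C, C_mul, C_pow, C_ofNat]
  ring_nf

end ExponentialTimesPolynomial

section HyperbolicCotangent

variable {z : ℂ}

theorem one_div_sinh_sq_eq (hz : Complex.sinh z ≠ 0) :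
    1 / Complex.sinh z ^ 2 =
      (Complex.cosh z / Complex.sinh z - 1) * (Complex.cosh z / Complex.sinh z - 1 + 2) := by
  field_simp
  linear_combination -Complex.cosh_sq z

theorem hasDerivAt_cosh_div_sinh (hz : Complex.sinh z ≠ 0) :
    HasDerivAt (fun w ↦ Complex.cosh w / Complex.sinh w) (-(1 / Complex.sinh z ^ 2)) z := by
  refine ((Complex.hasDerivAt_cosh z).div (Complex.hasDerivAt_sinh z) hz).congr_deriv ?_
  rw [← neg_div]
  congr 1
  linear_combination -Complex.cosh_sq z

end HyperbolicCotangent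

section RadialEquation

variable {𝕜 : Type*} [NontriviallyNormedField 𝕜] [NormedAlgebra 𝕜 ℂ]

theorem hasDerivAt_coth_sub_one {κ : ℂ} {r : 𝕜} (hr : Complex.sinh (κ * algebraMap 𝕜 ℂ r) ≠ 0) :
    HasDerivAt
      (fun t : 𝕜 ↦ Complex.cosh (κ * algebraMap 𝕜 ℂ t) / Complex.sinh (κ * algebraMap 𝕜 ℂ t) - 1)
      ((C (-κ) * (X * (X + 2))).eval
        (Complex.cosh (κ * algebraMap 𝕜 ℂ r) / Complex.sinh (κ * algebraMap 𝕜 ℂ r) - 1)) r := by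
  refine (((hasDerivAt_cosh_div_sinh hr).comp r
    (hasDerivAt_const_mul_algebraMap κ r)).sub_const 1).congr_deriv ?_
  rw [one_div_sinh_sq_eq hr]
  simp only [eval_mul, eval_add, eval_C, eval_X, eval_ofNat]
  ring

/-- The outgoing solution `u_{2k+1}(z;σ)` of the radial equation, with its formula extended to
complex `κ` and `z`; imaginary `κ` corresponds to positive curvature. -/
noncomputable def outgoingSolution (k : ℕ) (κ σ z : ℂ) : ℂ :=
  Complex.exp (Complex.I * z * σ) * ∑ j ∈ Finset.range k,
    (Complex.cosh (κ * z) / Complex.sinh (κ * z) - 1) ^ j / (2 ^ j * (j.factorial : ℂ)) *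
      (∏ l ∈ Finset.Icc 1 j, ((k : ℂ) * (k - 1) - l * (l - 1))) *
      ∏ m ∈ Finset.Icc (j + 1) (k - 1), ((m : ℂ) - Complex.I * κ⁻¹ * σ)

theorem outgoingSolution_eq_exp_mul_eval (k : ℕ) (κ σ z : ℂ) :
    outgoingSolution k κ σ z = Complex.exp (Complex.I * σ * z) *
      (outgoingPoly k (Complex.I * κ⁻¹ * σ)).eval
        (Complex.cosh (κ * z) / Complex.sinh (κ * z) - 1) := by
  rw [outgoingSolution, outgoingPoly, eval_finsetSum, mul_right_comm]
  congr 1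
  refine Finset.sum_congr rfl fun j _ ↦ ?_
  rw [eval_monomial, outgoingCoeff]
  ring

end RadialEquation

theorem stmt_9_general {𝕜 : Type*} [NontriviallyNormedField 𝕜] [NormedAlgebra 𝕜 ℂ] (k : ℕ)
    {κ : ℂ} (σ : ℂ) {r : 𝕜} (hr : Complex.sinh (κ * algebraMap 𝕜 ℂ r) ≠ 0) :
    -deriv (deriv fun t : 𝕜 ↦ outgoingSolution k κ σ (algebraMap 𝕜 ℂ t)) r
      + (k : ℂ) * (k - 1) * (κ ^ 2 / Complex.sinh (κ * algebraMap 𝕜 ℂ r) ^ 2) *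
          outgoingSolution k κ σ (algebraMap 𝕜 ℂ r)
      - σ ^ 2 * outgoingSolution k κ σ (algebraMap 𝕜 ℂ r) = 0 := by
  have hκ : κ ≠ 0 := by
    rintro rfl
    simp at hr
  have hs : Complex.I * σ = κ * (Complex.I * κ⁻¹ * σ) := by field_simp
  have hσ : σ ^ 2 = -(κ * (Complex.I * κ⁻¹ * σ)) ^ 2 := by
    rw [← hs, mul_pow, Complex.I_sq, neg_one_mul, neg_neg]
  have hexp (t : 𝕜) : HasDerivAt (fun t ↦ Complex.exp (Complex.I * σ * algebraMap 𝕜 ℂ t))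
      (Complex.I * σ * Complex.exp (Complex.I * σ * algebraMap 𝕜 ℂ t)) t :=
    (hasDerivAt_const_mul_algebraMap (Complex.I * σ) t).cexp.congr_deriv (mul_comm _ _)
  have hsinh : ∀ᶠ t in 𝓝 r, Complex.sinh (κ * algebraMap 𝕜 ℂ t) ≠ 0 :=
    (Complex.continuous_sinh.continuousAt.comp
      (hasDerivAt_const_mul_algebraMap κ r).continuousAt).eventually_ne hr
  simp only [outgoingSolution_eq_exp_mul_eval]
  rw [deriv_deriv_mul_eval _ (.of_forall hexp) (hsinh.mono fun t ↦ hasDerivAt_coth_sub_one),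
    div_eq_mul_one_div (κ ^ 2), one_div_sinh_sq_eq hr, hσ, hs, radialOperator_outgoingPoly]
  simp only [eval_add, eval_mul, eval_C, eval_X, eval_ofNat]
  ring

open Complex Finset in
/-- Section 2: the explicit outgoing function
`u_{2k+1}(r;σ) = e^{irσ} Σ_{j=0}^{k-1} ((coth(κr)-1)^j/(2^j j!))
  ∏_{l=1}^{j}(k(k-1)-l(l-1)) ∏_{m=j+1}^{k-1}(m-iκ⁻¹σ)`
solves the radial equation `-u'' + k(k-1)(κ²/sinh²(κr)) u - σ² u = 0` on `(0,∞)`. -/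
theorem stmt_9 (k : ℕ) (hk : 1 ≤ k) (κ : ℝ) (hκ : 0 < κ) (σ : ℂ)
    (u : ℝ → ℂ)
    (hu : ∀ r : ℝ, u r = Complex.exp (I * r * σ) *
      ∑ j ∈ range k,
        (((Real.cosh (κ * r) / Real.sinh (κ * r) : ℝ) - 1 : ℂ) ^ j /
            (2 ^ j * (Nat.factorial j : ℂ))) *
          (∏ l ∈ Icc 1 j, ((k : ℂ) * ((k : ℂ) - 1) - (l : ℂ) * ((l : ℂ) - 1))) *
          (∏ m ∈ Icc (j + 1) (k - 1), ((m : ℂ) - I * (κ : ℂ)⁻¹ * σ))) :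
    ∀ r : ℝ, 0 < r →
      -deriv (deriv u) r
        + (k : ℂ) * ((k : ℂ) - 1) *
            ((κ : ℂ) ^ 2 / (Real.sinh (κ * r) : ℂ) ^ 2) * u r
        - σ ^ 2 * u r = 0 := by
  intro r hr
  obtain rfl : u = fun t : ℝ ↦ outgoingSolution k κ σ t :=
    funext fun t ↦ by simp [hu, outgoingSolution]
  have hsinh : (Real.sinh (κ * r) : ℂ) ≠ 0 :=
    Complex.ofReal_ne_zero.2 (Real.sinh_pos_iff.2 (mul_pos hκ hr)).ne'
  push_cast at hsinh ⊢
  exact stmt_9_general k σ hsinh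
end

section
/- Let k ≥ 2 be an integer and κ > 0. For every ε > 0 there exists R₀ > 0 such that for every R > R₀ there exists σ ∈ ℂ with |σ + iκ| < ε and u_{2k+1}(R;σ) = 0, where u_{2k+1}(r;σ) = e^{irσ} Σ_{j=0}^{k−1} ((coth(κr)−1)^j/(2^j j!)) · ∏_{l=1}^{j}( k(k−1) − l(l−1) ) · ∏_{m=j+1}^{k−1}( m − iκ^{−1}σ ), with empty products equal to 1. -/
/-!
With `s = iκ⁻¹σ` and `t = coth (κR) - 1`, the function `u` is, up to an exponential, a polynomial in
`s` depending continuously on `t`. As `R → ∞` we have `t → 0`, and at `t = 0` only the term `j = 0`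
survives: the polynomial becomes `∏ m ∈ [1, k - 1], (m - s)`, which vanishes at `s = 1`. By
Hurwitz's theorem this zero persists nearby for small `t`, and `s` near `1` means `σ` near `-iκ`.
-/

section Hurwitz

open Bornology Filter Metric Set Topology

variable {E ι : Type*} [NormedAddCommGroup E] [NormedSpace ℂ E] [FiniteDimensional ℂ E]
  [Nontrivial E] {l : Filter ι}

theorem exists_eq_zero_of_norm_lt_norm_frontier {f : E → ℂ} {U : Set E} {z₀ : E}
    (hU : IsBounded U) (hf : DiffContOnCl ℂ f U) (hz₀ : z₀ ∈ U)
    (hlt : ∀ z ∈ frontier U, ‖f z₀‖ < ‖f z‖) : ∃ z ∈ U, f z = 0 := by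
  by_contra! hne
  have hne_closure : ∀ z ∈ closure U, f z ≠ 0 := by
    intro z hz
    by_cases hzU : z ∈ U
    · exact hne z hzU
    · have hz_frontier : z ∈ frontier U := ⟨hz, fun hi ↦ hzU (interior_subset hi)⟩
      exact norm_pos_iff.mp ((norm_nonneg _).trans_lt (hlt z hz_frontier))
  obtain ⟨w, hw, hmax⟩ :=
    Complex.exists_mem_frontier_isMaxOn_norm hU ⟨z₀, hz₀⟩ (hf.inv hne_closure)
  have hinv : ‖f z₀‖⁻¹ ≤ ‖f w‖⁻¹ := by simpa using hmax (subset_closure hz₀)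
  have hle : ‖f w‖ ≤ ‖f z₀‖ := (inv_le_inv₀ (norm_pos_iff.mpr (hne z₀ hz₀))
    (norm_pos_iff.mpr (hne_closure w (frontier_subset_closure hw)))).mp hinv
  exact (hlt w hw).not_ge hle

theorem eventually_exists_eq_zero_of_tendstoUniformlyOn {F : ι → E → ℂ} {f : E → ℂ} {U : Set E}
    {z₀ : E} (hlim : TendstoUniformlyOn F f l (closure U)) (hU : IsBounded U)
    (hF : ∀ᶠ i in l, DiffContOnCl ℂ (F i) U) (hz₀ : z₀ ∈ U) (hzero : f z₀ = 0)
    (hne : ∀ z ∈ frontier U, f z ≠ 0) :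
    ∀ᶠ i in l, ∃ z ∈ U, F i z = 0 := by
  obtain rfl | _ := l.eq_or_neBot
  · exact eventually_bot
  have := FiniteDimensional.proper ℂ E
  have hf : ContinuousOn f (closure U) :=
    hlim.continuousOn (hF.mono fun _ hFi ↦ hFi.continuousOn).frequently
  have hcompact : IsCompact (frontier U) :=
    hU.isCompact_closure.of_isClosed_subset isClosed_frontier frontier_subset_closure
  obtain ⟨δ, hδ, hδ_le⟩ : ∃ δ > 0, ∀ z ∈ frontier U, δ ≤ ‖f z‖ :=
    hcompact.exists_forall_le' (hf.mono frontier_subset_closure).norm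
      fun z hz ↦ norm_pos_iff.mpr (hne z hz)
  filter_upwards [hF, Metric.tendstoUniformlyOn_iff.mp hlim (δ / 2) (half_pos hδ)] with i hFi hclose
  refine exists_eq_zero_of_norm_lt_norm_frontier hU hFi hz₀ fun z hz ↦ ?_
  have hcenter : ‖F i z₀‖ < δ / 2 := by simpa [hzero] using hclose z₀ (subset_closure hz₀)
  have hfrontier : ‖f z - F i z‖ < δ / 2 := by
    simpa [dist_eq_norm] using hclose z (frontier_subset_closure hz)
  linarith [hδ_le z hz, norm_sub_norm_le (f z) (F i z)]

theorem eventually_exists_eq_zero_of_tendstoLocallyUniformlyOn {F : ι → ℂ → ℂ}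
    {f : ℂ → ℂ} {z₀ : ℂ} {U s : Set ℂ} (hlim : TendstoLocallyUniformlyOn F f l U) (hU : IsOpen U)
    (hF : ∀ᶠ i in l, DifferentiableOn ℂ (F i) U) (hz₀ : z₀ ∈ U) (hzero : f z₀ = 0)
    (hne : ∃ᶠ z in 𝓝 z₀, f z ≠ 0) (hs : s ∈ 𝓝 z₀) :
    ∀ᶠ i in l, ∃ z ∈ s, F i z = 0 := by
  obtain rfl | _ := l.eq_or_neBot
  · exact eventually_bot
  have hf : DifferentiableOn ℂ f U := hlim.differentiableOn hF hU
  have hisolated : ∀ᶠ z in 𝓝[≠] z₀, f z ≠ 0 :=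
    (hf.analyticAt (hU.mem_nhds hz₀)).eventually_eq_zero_or_eventually_ne_zero.resolve_left
      fun h ↦ hne (by simpa using h)
  obtain ⟨r, hr, hball⟩ := nhds_basis_closedBall.mem_iff.mp
    (inter_mem (inter_mem (hU.mem_nhds hz₀) hs) (eventually_nhdsWithin_iff.mp hisolated))
  have hballU : closure (ball z₀ r) ⊆ U := fun z hz ↦
    (hball (closure_ball_subset_closedBall hz)).1.1
  have hsphere : ∀ z ∈ frontier (ball z₀ r), f z ≠ 0 := by
    rw [frontier_ball z₀ hr.ne']
    exact fun z hz ↦ (hball (sphere_subset_closedBall hz)).2 (ne_of_mem_sphere hz hr.ne')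
  have hlim_ball : TendstoUniformlyOn F f l (closure (ball z₀ r)) :=
    (tendstoLocallyUniformlyOn_iff_forall_isCompact hU).mp hlim _ hballU
      isBounded_ball.isCompact_closure
  have hzeros := eventually_exists_eq_zero_of_tendstoUniformlyOn hlim_ball isBounded_ball
    (hF.mono fun i hFi ↦ (hFi.mono hballU).diffContOnCl)
    (mem_ball_self hr) hzero hsphere
  filter_upwards [hzeros] with i ⟨z, hz, hFz⟩
  exact ⟨z, (hball (ball_subset_closedBall hz)).1.2, hFz⟩

theorem tendstoLocallyUniformly_nhds_of_continuous {X Y Z : Type*} [TopologicalSpace X]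
    [TopologicalSpace Y] [WeaklyLocallyCompactSpace Y] [UniformSpace Z] {f : X → Y → Z}
    (hf : Continuous ↿f) (x : X) : TendstoLocallyUniformly f (f x) (𝓝 x) :=
  ContinuousMap.tendsto_iff_tendstoLocallyUniformly.mp
    ((ContinuousMap.curry ⟨↿f, hf⟩).continuous.tendsto x)

end Hurwitz

section Coth

open Filter Real Topology

/-- At `x = 0` both sides are divisions by zero. -/
theorem cosh_div_sinh_eq (x : ℝ) :
    cosh x / sinh x = (1 + exp (-(2 * x))) / (1 - exp (-(2 * x))) := by
  have hexp : exp (-(2 * x)) = exp (-x) * exp (-x) := by rw [← exp_add]; ring_nf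
  have hone : exp (-x) * exp x = 1 := by rw [← exp_add]; simp
  rw [← mul_div_mul_left (cosh x) (sinh x) (mul_ne_zero two_ne_zero (exp_ne_zero (-x))),
    cosh_eq, sinh_eq, hexp]
  congr 1 <;> linear_combination hone

theorem tendsto_cosh_div_sinh_atTop : Tendsto (fun x ↦ cosh x / sinh x) atTop (𝓝 1) := by
  have hexp : Tendsto (fun x : ℝ ↦ exp (-(2 * x))) atTop (𝓝 0) :=
    tendsto_exp_neg_atTop_nhds_zero.comp (tendsto_id.const_mul_atTop two_pos)
  simp only [cosh_div_sinh_eq]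
  simpa [Pi.div_def] using (hexp.const_add 1).div (hexp.const_sub 1) (by norm_num)

end Coth

section Resonances

open Complex Filter Finset Metric Topology

/-- The non-exponential factor of `u_{2k+1}(r;σ)`, in the variables `t = coth (κr) - 1` and
`s = iκ⁻¹σ`, in which it is a polynomial free of `κ`. -/
noncomputable def resonanceFactor (k : ℕ) (t s : ℂ) : ℂ :=
  ∑ j ∈ range k, (t ^ j / (2 ^ j * (Nat.factorial j : ℂ))) *
    (∏ l ∈ Icc 1 j, ((k : ℂ) * ((k : ℂ) - 1) - (l : ℂ) * ((l : ℂ) - 1))) *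
    ∏ m ∈ Icc (j + 1) (k - 1), ((m : ℂ) - s)

theorem resonanceFactor_zero {k : ℕ} (hk : 0 < k) (s : ℂ) :
    resonanceFactor k 0 s = ∏ m ∈ Icc 1 (k - 1), ((m : ℂ) - s) := by
  rw [resonanceFactor, sum_eq_single_of_mem 0 (mem_range.mpr hk) fun j _ hj ↦ by simp [hj]]
  simp

theorem continuous_resonanceFactor (k : ℕ) : Continuous ↿(resonanceFactor k) := by
  unfold resonanceFactor
  fun_prop

theorem differentiable_resonanceFactor (k : ℕ) (t : ℂ) :
    Differentiable ℂ (resonanceFactor k t) := by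
  unfold resonanceFactor
  fun_prop

theorem frequently_resonanceFactor_zero_ne_zero {k : ℕ} (hk : 0 < k) (s₀ : ℂ) :
    ∃ᶠ s in 𝓝 s₀, resonanceFactor k 0 s ≠ 0 := by
  have hnodes : ∀ᶠ s in 𝓝[≠] s₀, s ∉ (Icc 1 (k - 1)).image (Nat.cast : ℕ → ℂ) :=
    nhdsNE_le_cofinite s₀ (Finset.eventually_cofinite_notMem _)
  refine (hnodes.mono fun s hs ↦ ?_).frequently.filter_mono nhdsWithin_le_nhds
  rw [resonanceFactor_zero hk, prod_ne_zero_iff]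
  exact fun m hm ↦ sub_ne_zero.mpr fun h ↦ hs (mem_image.mpr ⟨m, hm, h⟩)

theorem eventually_exists_resonanceFactor_eq_zero {k n : ℕ} (hn : 1 ≤ n) (hnk : n < k)
    {V : Set ℂ} (hV : V ∈ 𝓝 (n : ℂ)) :
    ∀ᶠ t in 𝓝 0, ∃ s ∈ V, resonanceFactor k t s = 0 := by
  have hk : 0 < k := by lia
  have hzero : resonanceFactor k 0 n = 0 := by
    rw [resonanceFactor_zero hk]
    exact prod_eq_zero (mem_Icc.mpr ⟨hn, by lia⟩) (sub_self (n : ℂ))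
  exact eventually_exists_eq_zero_of_tendstoLocallyUniformlyOn
    (tendstoLocallyUniformly_nhds_of_continuous
      (continuous_resonanceFactor k) 0).tendstoLocallyUniformlyOn isOpen_univ
    (.of_forall fun t ↦ (differentiable_resonanceFactor k t).differentiableOn) (Set.mem_univ _)
    hzero (frequently_resonanceFactor_zero_ne_zero hk n) hV

theorem tendsto_coth_sub_one {κ : ℝ} (hκ : 0 < κ) :
    Tendsto (fun R : ℝ ↦ ((Real.cosh (κ * R) / Real.sinh (κ * R) : ℝ) - 1 : ℂ)) atTop (𝓝 0) := by
  have hcoth := tendsto_cosh_div_sinh_atTop.comp (tendsto_id.const_mul_atTop hκ)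
  simpa using ((continuous_ofReal.tendsto 1).comp hcoth).sub_const 1

theorem eventually_exists_resonanceFactor_coth_eq_zero {k n : ℕ} (hn : 1 ≤ n) (hnk : n < k)
    {κ ε : ℝ} (hκ : 0 < κ) (hε : 0 < ε) :
    ∀ᶠ R : ℝ in atTop, ∃ σ : ℂ, ‖σ + I * κ * n‖ < ε ∧
      resonanceFactor k ((Real.cosh (κ * R) / Real.sinh (κ * R) : ℝ) - 1)
        (I * (κ : ℂ)⁻¹ * σ) = 0 := by
  have hκ' : (κ : ℂ) ≠ 0 := ofReal_ne_zero.mpr hκ.ne'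
  have hzeros := (tendsto_coth_sub_one hκ).eventually
    (eventually_exists_resonanceFactor_eq_zero hn hnk (ball_mem_nhds (n : ℂ) (div_pos hε hκ)))
  filter_upwards [hzeros] with R ⟨s, hs, hzero⟩
  have hs_eq : I * (κ : ℂ)⁻¹ * (-(I * κ) * s) = s := by
    field_simp
    simp
  refine ⟨-(I * κ) * s, ?_, by rwa [hs_eq]⟩
  calc ‖-(I * κ) * s + I * κ * n‖ = ‖-(I * κ) * (s - n)‖ := by ring_nf
    _ = κ * ‖s - n‖ := by simp [abs_of_pos hκ]
    _ < κ * (ε / κ) := by gcongr; exact mem_ball_iff_norm.mp hs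
    _ = ε := mul_div_cancel₀ ε hκ.ne'

end Resonances

open Complex Finset in
/-- Section 2 (via Rouché's theorem): for `k ≥ 2`, spherical obstacles of sufficiently
large radius `R` in `ℍ^{2k+1}_κ` have a resonance `σ` with `|σ + iκ| < ε`, i.e. a zero
of `σ ↦ u_{2k+1}(R;σ)`. -/
theorem stmt_10 (k : ℕ) (hk : 2 ≤ k) (κ : ℝ) (hκ : 0 < κ)
    (u : ℕ → ℝ → ℂ → ℂ)
    (hu : ∀ (r : ℝ) (σ : ℂ), u (2 * k + 1) r σ = Complex.exp (I * r * σ) *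
      ∑ j ∈ range k,
        (((Real.cosh (κ * r) / Real.sinh (κ * r) : ℝ) - 1 : ℂ) ^ j /
            (2 ^ j * (Nat.factorial j : ℂ))) *
          (∏ l ∈ Icc 1 j, ((k : ℂ) * ((k : ℂ) - 1) - (l : ℂ) * ((l : ℂ) - 1))) *
          (∏ m ∈ Icc (j + 1) (k - 1), ((m : ℂ) - I * (κ : ℂ)⁻¹ * σ))) :
    ∀ ε : ℝ, 0 < ε → ∃ R₀ : ℝ, 0 < R₀ ∧
      ∀ R : ℝ, R₀ < R → ∃ σ : ℂ, ‖σ + I * κ‖ < ε ∧ u (2 * k + 1) R σ = 0 := by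
  intro ε hε
  have hzeros := eventually_exists_resonanceFactor_coth_eq_zero le_rfl (show 1 < k by lia) hκ hε
  obtain ⟨R₀, hR₀_pos, hR₀⟩ := (Filter.atTop_basis_Ioi' 0).eventually_iff.mp hzeros
  refine ⟨R₀, hR₀_pos, fun R hR ↦ ?_⟩
  obtain ⟨σ, hσ, hzero⟩ := hR₀ hR
  refine ⟨σ, by simpa using hσ, ?_⟩
  rw [hu]
  exact mul_eq_zero_of_right _ hzero
end

section
/- For ρ̃ > 0 and t > 0, set a(ρ̃,t) = (1/(2(t+5))) · log( (cosh(ρ̃t) − 1)/(4(cosh(3ρ̃) − 1)) ). If ρ̃ > 0 satisfies 4 e^{5ρ̃} ( cosh(3ρ̃) − 1 ) < 1/2, then there exists t > 0 such that a(ρ̃,t) > ρ̃/2; in particular A(ρ̃) := sup_{t>0} a(ρ̃,t) > ρ̃/2. -/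
/-! Factoring `cosh x - 1 = eˣ (1 - e⁻ˣ)² / 2` cancels the exponential growth of the argument of the
logarithm against the threshold rate `ρ / 2`: the inequality `ρ / 2 < a(ρ, t)` becomes
`4 e^{5ρ} (cosh (3ρ) - 1) < (1 - e^{-ρt})² / 2`, whose right-hand side tends to `1 / 2` as `t → ∞`.
The supremum is a genuine one because `cosh x - 1 ≤ e^{|x|}` makes `a(ρ, ·)` bounded above. -/

section LogCoshRate

open Real Filter
open scoped Topology

variable {c K ρ t : ℝ}

/-- The exponential rate `a(ρ, t)` with the time delay `c` and the normalising constant `K` kept as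
parameters; the paper has `c = 5` and `K = 4 (cosh (3ρ) - 1)`. -/
noncomputable def logCoshRate (c K ρ t : ℝ) : ℝ :=
  (1 / (2 * (t + c))) * log ((cosh (ρ * t) - 1) / K)

lemma cosh_sub_one_eq (x : ℝ) : cosh x - 1 = exp x * ((1 - exp (-x)) ^ 2 / 2) := by
  have hmul : exp x * exp (-x) = 1 := by rw [← exp_add, add_neg_cancel, exp_zero]
  rw [cosh_eq]
  linear_combination (1 - exp (-x) / 2) * hmul

lemma half_lt_logCoshRate_iff (hK : 0 < K) (htc : 0 < t + c) (hρt : ρ * t ≠ 0) :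
    ρ / 2 < logCoshRate c K ρ t ↔ exp (c * ρ) * K < (1 - exp (-(ρ * t))) ^ 2 / 2 := by
  have hcosh : 0 < cosh (ρ * t) - 1 := sub_pos.2 (one_lt_cosh.2 hρt)
  calc ρ / 2 < logCoshRate c K ρ t
      ↔ ρ * t + c * ρ < log ((cosh (ρ * t) - 1) / K) := by
        rw [logCoshRate, one_div, inv_mul_eq_div, lt_div_iff₀ (by positivity)]
        ring_nf
    _ ↔ exp (ρ * t) * (exp (c * ρ) * K) < cosh (ρ * t) - 1 := by
        rw [lt_log_iff_exp_lt (by positivity), lt_div_iff₀ hK, exp_add, mul_assoc]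
    _ ↔ exp (c * ρ) * K < (1 - exp (-(ρ * t))) ^ 2 / 2 := by
        rw [cosh_sub_one_eq, mul_lt_mul_iff_right₀ (exp_pos _)]

lemma tendsto_one_sub_exp_neg_mul_sq_div_two (hρ : 0 < ρ) :
    Tendsto (fun t ↦ (1 - exp (-(ρ * t))) ^ 2 / 2) atTop (𝓝 (1 / 2)) := by
  have hexp : Tendsto (fun t ↦ exp (-(ρ * t))) atTop (𝓝 0) :=
    tendsto_exp_neg_atTop_nhds_zero.comp (tendsto_id.const_mul_atTop hρ)
  simpa using ((hexp.const_sub 1).pow 2).div_const 2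

lemma eventually_half_lt_logCoshRate (hρ : 0 < ρ) (hK : 0 < K) (hsmall : exp (c * ρ) * K < 1 / 2) :
    ∀ᶠ t in atTop, ρ / 2 < logCoshRate c K ρ t := by
  filter_upwards [(tendsto_one_sub_exp_neg_mul_sq_div_two hρ).eventually_const_lt hsmall,
    eventually_gt_atTop 0, eventually_gt_atTop (-c)] with t hlt ht htc
  exact (half_lt_logCoshRate_iff hK (neg_lt_iff_pos_add.1 htc) (mul_pos hρ ht).ne').2 hlt

lemma log_cosh_sub_one_le_abs (x : ℝ) : log (cosh x - 1) ≤ |x| := by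
  rcases eq_or_ne x 0 with rfl | hx
  · simp
  have hcosh : cosh x - 1 ≤ exp |x| := by
    have hle : exp (-|x|) ≤ exp |x| := exp_le_exp.2 (neg_le_self (abs_nonneg x))
    rw [← cosh_abs, cosh_eq]
    linarith
  exact (log_le_iff_le_exp (sub_pos.2 (one_lt_cosh.2 hx))).2 hcosh

lemma logCoshRate_le (hc : 0 < c) (hK : K ≠ 0) (hρ : ρ ≠ 0) (ht : 0 < t) :
    logCoshRate c K ρ t ≤ |ρ| / 2 + |log K| / (2 * c) := by
  have hcosh : cosh (ρ * t) - 1 ≠ 0 :=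
    (sub_pos.2 (one_lt_cosh.2 (mul_ne_zero hρ ht.ne'))).ne'
  have hlog : log ((cosh (ρ * t) - 1) / K) ≤ |ρ| * t + |log K| :=
    calc log ((cosh (ρ * t) - 1) / K)
        = log (cosh (ρ * t) - 1) + -log K := by rw [log_div hcosh hK, sub_eq_add_neg]
      _ ≤ |ρ * t| + |log K| := add_le_add (log_cosh_sub_one_le_abs _) (neg_le_abs _)
      _ = |ρ| * t + |log K| := by rw [abs_mul, abs_of_pos ht]
  calc logCoshRate c K ρ t
      ≤ (|ρ| * t + |log K|) / (2 * (t + c)) := by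
        rw [logCoshRate, one_div, inv_mul_eq_div]
        gcongr
    _ = |ρ| * t / (2 * (t + c)) + |log K| / (2 * (t + c)) := add_div _ _ _
    _ ≤ |ρ| / 2 + |log K| / (2 * c) := by
        refine add_le_add ?_ (by gcongr; linarith)
        rw [div_le_div_iff₀ (by positivity) two_pos]
        linarith [mul_nonneg (abs_nonneg ρ) hc.le]

end LogCoshRate

/-- Section 5: if `4e^{5ρ̃}(cosh(3ρ̃)-1) < 1/2`, then there is `t > 0` with
`a(ρ̃,t) > ρ̃/2`, where `a(ρ̃,t) = log((cosh(ρ̃t)-1)/(4(cosh(3ρ̃)-1)))/(2(t+5))`;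
in particular `A(ρ̃) = sup_{t>0} a(ρ̃,t) > ρ̃/2`. -/
theorem stmt_14 (a : ℝ → ℝ → ℝ)
    (ha : ∀ ρ t : ℝ, a ρ t =
      (1 / (2 * (t + 5))) * Real.log ((Real.cosh (ρ * t) - 1) / (4 * (Real.cosh (3 * ρ) - 1))))
    (ρ : ℝ) (hρ : 0 < ρ)
    (hsmall : 4 * Real.exp (5 * ρ) * (Real.cosh (3 * ρ) - 1) < 1 / 2) :
    (∃ t : ℝ, 0 < t ∧ ρ / 2 < a ρ t) ∧
    ρ / 2 < sSup {y : ℝ | ∃ t : ℝ, 0 < t ∧ y = a ρ t} := by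
  set K := 4 * (Real.cosh (3 * ρ) - 1)
  have hK : 0 < K := mul_pos four_pos (sub_pos.2 (Real.one_lt_cosh.2 (by positivity)))
  have ha_eq (t : ℝ) : a ρ t = logCoshRate 5 K ρ t := ha ρ t
  have hsmallK : Real.exp (5 * ρ) * K < 1 / 2 := by linarith
  obtain ⟨t, hlt, ht⟩ := ((eventually_half_lt_logCoshRate hρ hK hsmallK).and
    (Filter.eventually_gt_atTop 0)).exists
  rw [← ha_eq] at hlt
  have hbdd : BddAbove {y : ℝ | ∃ t : ℝ, 0 < t ∧ y = a ρ t} := by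
    refine ⟨|ρ| / 2 + |Real.log K| / (2 * 5), ?_⟩
    rintro _ ⟨s, hs, rfl⟩
    exact (ha_eq s).trans_le (logCoshRate_le (by norm_num) hK.ne' hρ.ne' hs)
  exact ⟨⟨t, ht, hlt⟩, hlt.trans_le (le_csSup hbdd ⟨t, ht, rfl⟩)⟩
end

section
/- For ρ̃ > 0 and t > 0, set a(ρ̃,t) = (1/(2(t+5))) · log( (cosh(ρ̃t) − 1)/(4(cosh(3ρ̃) − 1)) ) and A(ρ̃) = sup_{t>0} a(ρ̃,t). Then A(ρ̃) tends to sup_{t>0} log( t²/36 )/(2(t+5)) as ρ̃ → 0⁺. -/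
/-!
Comparing `cosh x - 1 = 2 sinh² (x / 2)` with `x² / 2` costs at most a factor `exp |x|`, so
`log (cosh x - 1) - log (x² / 2)` lies in `[0, |x|]`. Apply this at `x = ρt` and `x = 3ρ`: the
hyperbolic logarithm differs from `log (t² / 36)` by at most `|ρ| * max t 3`. This error grows
linearly in `t`, but so does the denominator `2 (t + 5)`; hence the quotients are within `|ρ| / 2`
of each other uniformly in `t > 0`, and so are their suprema.
-/

open Set Filter Topology

section Supremum

variable {α β : Type*} {s : Set α} {f g : α → β} {ε : β}

theorem csSup_image_le_csSup_image_add [ConditionallyCompleteLattice β] [Add β]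
    [AddRightMono β] (hs : s.Nonempty) (hg : BddAbove (g '' s))
    (h : ∀ x ∈ s, f x ≤ g x + ε) : sSup (f '' s) ≤ sSup (g '' s) + ε := by
  refine csSup_le (hs.image f) ?_
  rintro _ ⟨x, hx, rfl⟩
  grw [h x hx, le_csSup hg (mem_image_of_mem g hx)]

theorem bddAbove_image_of_forall_le_add [Preorder β] [Add β] [AddRightMono β]
    (hg : BddAbove (g '' s)) (h : ∀ x ∈ s, f x ≤ g x + ε) : BddAbove (f '' s) := by
  obtain ⟨b, hb⟩ := hg
  refine ⟨b + ε, ?_⟩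
  rintro _ ⟨x, hx, rfl⟩
  grw [h x hx, hb (mem_image_of_mem g hx)]

theorem abs_csSup_image_sub_csSup_image_le [ConditionallyCompleteLinearOrder β] [AddCommGroup β]
    [IsOrderedAddMonoid β] (hs : s.Nonempty) (hg : BddAbove (g '' s))
    (h : ∀ x ∈ s, |f x - g x| ≤ ε) : |sSup (f '' s) - sSup (g '' s)| ≤ ε := by
  have hfg : ∀ x ∈ s, f x ≤ g x + ε := fun x hx ↦
    sub_le_iff_le_add'.1 (abs_sub_le_iff.1 (h x hx)).1
  have hgf : ∀ x ∈ s, g x ≤ f x + ε := fun x hx ↦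
    sub_le_iff_le_add'.1 (abs_sub_le_iff.1 (h x hx)).2
  have hf : BddAbove (f '' s) := bddAbove_image_of_forall_le_add hg hfg
  exact abs_sub_le_iff.2 ⟨sub_le_iff_le_add'.2 (csSup_image_le_csSup_image_add hs hg hfg),
    sub_le_iff_le_add'.2 (csSup_image_le_csSup_image_add hs hf hgf)⟩

end Supremum

section Cosh

variable {x y : ℝ}

theorem cosh_sub_one_eq_two_mul_sinh_half_sq (x : ℝ) :
    Real.cosh x - 1 = 2 * Real.sinh (x / 2) ^ 2 := by
  have h := Real.cosh_two_mul (x / 2)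
  rw [Real.cosh_sq, mul_div_cancel₀ x two_ne_zero] at h
  linarith

theorem sinh_le_mul_exp (x : ℝ) : Real.sinh x ≤ x * Real.exp x := by
  have hneg : Real.exp (-x) = Real.exp (-(2 * x)) * Real.exp x := by
    rw [← Real.exp_add]
    ring_nf
  have htangent : 1 - 2 * x ≤ Real.exp (-(2 * x)) := Real.one_sub_le_exp_neg (2 * x)
  rw [Real.sinh_eq, hneg]
  nlinarith [Real.exp_pos x]

theorem half_sq_le_cosh_sub_one (x : ℝ) : x ^ 2 / 2 ≤ Real.cosh x - 1 := by
  have hsinh : |x / 2| ≤ |Real.sinh (x / 2)| := by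
    rw [Real.abs_sinh]
    exact Real.self_le_sinh_iff.2 (abs_nonneg _)
  calc x ^ 2 / 2 = 2 * (x / 2) ^ 2 := by ring
    _ ≤ 2 * Real.sinh (x / 2) ^ 2 := by gcongr 2 * ?_; exact sq_le_sq.2 hsinh
    _ = Real.cosh x - 1 := (cosh_sub_one_eq_two_mul_sinh_half_sq x).symm

theorem cosh_sub_one_le_half_sq_mul_exp_abs (x : ℝ) :
    Real.cosh x - 1 ≤ x ^ 2 / 2 * Real.exp |x| := by
  have hexp : Real.exp (|x| / 2) ^ 2 = Real.exp |x| := by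
    rw [← Real.exp_nat_mul, Nat.cast_ofNat, mul_div_cancel₀ _ two_ne_zero]
  calc Real.cosh x - 1 = 2 * Real.sinh (|x| / 2) ^ 2 := by
        rw [← Real.cosh_abs, cosh_sub_one_eq_two_mul_sinh_half_sq]
    _ ≤ 2 * (|x| / 2 * Real.exp (|x| / 2)) ^ 2 := by gcongr; exact sinh_le_mul_exp _
    _ = x ^ 2 / 2 * Real.exp |x| := by rw [mul_pow, hexp, div_pow, sq_abs]; ring

theorem cosh_sub_one_pos (hx : x ≠ 0) : 0 < Real.cosh x - 1 :=
  sub_pos.2 (Real.one_lt_cosh.2 hx)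

theorem log_cosh_sub_one_sub_log_half_sq_mem_Icc (hx : x ≠ 0) :
    Real.log (Real.cosh x - 1) - Real.log (x ^ 2 / 2) ∈ Icc 0 |x| := by
  have hsq : 0 < x ^ 2 / 2 := by positivity
  refine ⟨sub_nonneg.2 (Real.log_le_log hsq (half_sq_le_cosh_sub_one x)),
    sub_le_iff_le_add'.2 ?_⟩
  calc Real.log (Real.cosh x - 1) ≤ Real.log (x ^ 2 / 2 * Real.exp |x|) :=
        Real.log_le_log (cosh_sub_one_pos hx) (cosh_sub_one_le_half_sq_mul_exp_abs x)
    _ = Real.log (x ^ 2 / 2) + |x| := by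
        rw [Real.log_mul hsq.ne' (Real.exp_ne_zero _), Real.log_exp]

theorem abs_log_cosh_sub_one_div_sub_log_sq_div_le (hx : x ≠ 0) (hy : y ≠ 0) :
    |Real.log ((Real.cosh x - 1) / (Real.cosh y - 1)) - Real.log (x ^ 2 / y ^ 2)| ≤
      max |x| |y| := by
  have hsq : x ^ 2 / y ^ 2 = x ^ 2 / 2 / (y ^ 2 / 2) :=
    (div_div_div_cancel_right₀ two_ne_zero _ _).symm
  rw [hsq, Real.log_div (cosh_sub_one_pos hx).ne' (cosh_sub_one_pos hy).ne',
    Real.log_div (by positivity) (by positivity), sub_sub_sub_comm]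
  obtain ⟨hx₀, hx₁⟩ := log_cosh_sub_one_sub_log_half_sq_mem_Icc hx
  obtain ⟨hy₀, hy₁⟩ := log_cosh_sub_one_sub_log_half_sq_mem_Icc hy
  exact abs_sub_le_iff.2 ⟨(sub_le_self _ hy₀).trans (hx₁.trans (le_max_left _ _)),
    (sub_le_self _ hx₀).trans (hy₁.trans (le_max_right _ _))⟩

end Cosh

/-- The quantity `a(ρ̃, t)`, whose supremum over `t > 0` is the hyperbolic constant `A(ρ̃)`. -/
noncomputable def hyperbolicRate (ρ t : ℝ) : ℝ :=
  1 / (2 * (t + 5)) * Real.log ((Real.cosh (ρ * t) - 1) / (4 * (Real.cosh (3 * ρ) - 1)))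

/-- The flat counterpart of `hyperbolicRate`, whose supremum over `t > 0` is the Euclidean
constant `μ`. -/
noncomputable def euclideanRate (t : ℝ) : ℝ :=
  Real.log (t ^ 2 / 36) / (2 * (t + 5))

section Rates

variable {ρ t : ℝ}

theorem euclideanRate_le_one (ht : 0 < t) : euclideanRate t ≤ 1 := by
  have hlog : Real.log (t ^ 2 / 36) ≤ 2 * (t / 6 - 1) := by
    rw [show t ^ 2 / 36 = (t / 6) ^ 2 by ring, Real.log_pow, Nat.cast_ofNat]
    gcongr
    exact Real.log_le_sub_one_of_pos (by positivity)
  rw [euclideanRate, div_le_one (by positivity)]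
  linarith

theorem bddAbove_euclideanRate_image_Ioi : BddAbove (euclideanRate '' Ioi 0) :=
  ⟨1, forall_mem_image.2 fun _ ht ↦ euclideanRate_le_one ht⟩

theorem abs_log_cosh_ratio_sub_log_sq_div_le (hρ : ρ ≠ 0) (ht : 0 < t) :
    |Real.log ((Real.cosh (ρ * t) - 1) / (4 * (Real.cosh (3 * ρ) - 1))) -
      Real.log (t ^ 2 / 36)| ≤ |ρ| * max t 3 := by
  have hρt : ρ * t ≠ 0 := mul_ne_zero hρ ht.ne'
  have h3ρ : 3 * ρ ≠ 0 := mul_ne_zero three_ne_zero hρ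
  have hsq : t ^ 2 / 36 = (ρ * t) ^ 2 / (3 * ρ) ^ 2 / 4 := by
    field_simp
    norm_num
  have hmax : max |ρ * t| |3 * ρ| = |ρ| * max t 3 := by
    rw [mul_comm 3 ρ, abs_mul, abs_mul, abs_of_pos ht, abs_of_pos (three_pos (α := ℝ)),
      mul_max_of_nonneg _ _ (abs_nonneg ρ)]
  have hratio : (Real.cosh (ρ * t) - 1) / (Real.cosh (3 * ρ) - 1) ≠ 0 :=
    div_ne_zero (cosh_sub_one_pos hρt).ne' (cosh_sub_one_pos h3ρ).ne'
  rw [hsq, mul_comm 4, ← div_div, Real.log_div hratio four_ne_zero,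
    Real.log_div (by positivity) four_ne_zero, sub_sub_sub_cancel_right, ← hmax]
  exact abs_log_cosh_sub_one_div_sub_log_sq_div_le hρt h3ρ

theorem abs_hyperbolicRate_sub_euclideanRate_le (hρ : ρ ≠ 0) (ht : 0 < t) :
    |hyperbolicRate ρ t - euclideanRate t| ≤ |ρ| / 2 := by
  have hden : 0 < 2 * (t + 5) := by positivity
  have hmax : max t 3 ≤ t + 5 := max_le (by linarith) (by linarith)
  rw [hyperbolicRate, euclideanRate, one_div_mul_eq_div, ← sub_div, abs_div, abs_of_pos hden,
    div_le_iff₀ hden]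
  calc _ ≤ |ρ| * max t 3 := abs_log_cosh_ratio_sub_log_sq_div_le hρ ht
    _ ≤ |ρ| * (t + 5) := by gcongr
    _ = |ρ| / 2 * (2 * (t + 5)) := by ring

theorem abs_sSup_hyperbolicRate_sub_sSup_euclideanRate_le (hρ : ρ ≠ 0) :
    |sSup (hyperbolicRate ρ '' Ioi 0) - sSup (euclideanRate '' Ioi 0)| ≤ |ρ| / 2 :=
  abs_csSup_image_sub_csSup_image_le nonempty_Ioi bddAbove_euclideanRate_image_Ioi
    fun _ ht ↦ abs_hyperbolicRate_sub_euclideanRate_le hρ ht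

end Rates

/-- Section 5: with `a(ρ̃,t) = log((cosh(ρ̃t)-1)/(4(cosh(3ρ̃)-1)))/(2(t+5))` and
`A(ρ̃) = sup_{t>0} a(ρ̃,t)`, one has `A(ρ̃) → sup_{t>0} log(t²/36)/(2(t+5))` as
`ρ̃ → 0⁺` (the Euclidean constant `μ`). -/
theorem stmt_16 (a : ℝ → ℝ → ℝ)
    (ha : ∀ ρ t : ℝ, a ρ t =
      (1 / (2 * (t + 5))) * Real.log ((Real.cosh (ρ * t) - 1) / (4 * (Real.cosh (3 * ρ) - 1))))
    (A : ℝ → ℝ)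
    (hA : ∀ ρ : ℝ, A ρ = sSup {y : ℝ | ∃ t : ℝ, 0 < t ∧ y = a ρ t}) :
    Filter.Tendsto A (nhdsWithin 0 (Set.Ioi 0))
      (nhds (sSup {y : ℝ | ∃ t : ℝ, 0 < t ∧ y = Real.log (t ^ 2 / 36) / (2 * (t + 5))})) := by
  have hset (f : ℝ → ℝ) : {y : ℝ | ∃ t : ℝ, 0 < t ∧ y = f t} = f '' Ioi 0 :=
    Set.ext fun _ ↦ exists_congr fun _ ↦ and_congr_right' eq_comm
  have hA' (ρ : ℝ) : A ρ = sSup (hyperbolicRate ρ '' Ioi 0) := by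
    rw [hA, hset, show a ρ = hyperbolicRate ρ from funext (ha ρ)]
  have hlim : Tendsto (fun ρ : ℝ ↦ |ρ| / 2) (𝓝[>] 0) (𝓝 0) :=
    (Continuous.tendsto' (by fun_prop) 0 0 (by simp)).mono_left nhdsWithin_le_nhds
  rw [hset fun t ↦ Real.log (t ^ 2 / 36) / (2 * (t + 5)), tendsto_iff_norm_sub_tendsto_zero]
  refine squeeze_zero' (Eventually.of_forall fun _ ↦ norm_nonneg _) ?_ hlim
  filter_upwards [self_mem_nhdsWithin] with ρ hρ
  rw [hA']
  exact abs_sSup_hyperbolicRate_sub_sSup_euclideanRate_le (ne_of_gt hρ)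
end

section
/- Let M ≥ 1 be an integer and let N be the nilpotent M × M Jordan block over ℂ, i.e., the matrix with entries N_{p,q} = 1 if q = p + 1 and N_{p,q} = 0 otherwise (indices 0,…,M−1). Define the linear map T : (ℂ^M)^M → (ℂ^M)^M by T(f_0,…,f_{M−1})_ℓ = Σ_{j=0}^{M−1−ℓ} N^{ℓ+j} f_j for ℓ = 0,…,M−1. Then the image of T has dimension M. -/
/-!
The powers of the nilpotent Jordan block shift coordinates: `(N ^ k v)_p = v_{p+k}`, where `v` is
extended by zero. Hence the `(ℓ, p)` entry of `T f` is `Σ_j (f j)_{ℓ+p+j}`, which depends only on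
`ℓ + p` and vanishes for `M ≤ ℓ + p`. Every sequence of `M` values arises in this way, already from
tuples with `f j = 0` for `j ≠ 0`, and the row `ℓ = 0` recovers the sequence. So the image is a copy
of the space of such sequences.
-/

section ZeroExtend

variable {M : ℕ} {R : Type*} [Semiring R]

/-- Extension of a vector by zero to a sequence indexed by `ℕ`. Working with such sequences
avoids carrying proofs of `ℓ + p < M` inside index expressions. -/
noncomputable def zeroExtend : (Fin M → R) →ₗ[R] ℕ → R :=
  Function.ExtendByZero.linearMap R Fin.val

@[simp]
theorem zeroExtend_val (v : Fin M → R) (i : Fin M) : zeroExtend v i = v i :=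
  Fin.val_injective.extend_apply v 0 i

theorem zeroExtend_of_le (v : Fin M → R) {n : ℕ} (hn : M ≤ n) : zeroExtend v n = 0 :=
  Function.extend_apply' v (0 : ℕ → R) n fun ⟨i, hi⟩ ↦ (i.isLt.trans_le hn).ne hi

theorem sum_ite_val_eq_zeroExtend (v : Fin M → R) (n : ℕ) :
    ∑ i : Fin M, (if (i : ℕ) = n then v i else 0) = zeroExtend v n := by
  obtain hn | hn := lt_or_ge n M
  · lift n to Fin M using hn
    simp [Fin.val_inj]
  · rw [zeroExtend_of_le v hn]
    exact Finset.sum_eq_zero fun i _ ↦ if_neg (i.isLt.trans_le hn).ne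

end ZeroExtend

section NilpotentJordanBlock

open Matrix

/-- The nilpotent `M × M` Jordan block, with ones on the superdiagonal. -/
def nilpotentJordanBlock (M : ℕ) (R : Type*) [Semiring R] : Matrix (Fin M) (Fin M) R :=
  Matrix.of fun p q ↦ if (q : ℕ) = p + 1 then 1 else 0

variable {M : ℕ} {R : Type*} [Semiring R]

theorem zeroExtend_nilpotentJordanBlock_mulVec (v : Fin M → R) (n : ℕ) :
    zeroExtend (nilpotentJordanBlock M R *ᵥ v) n = zeroExtend v (n + 1) := by
  obtain hn | hn := lt_or_ge n M
  · lift n to Fin M using hn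
    simp [← sum_ite_val_eq_zeroExtend v, nilpotentJordanBlock, mulVec, dotProduct]
  · rw [zeroExtend_of_le _ hn, zeroExtend_of_le v (hn.trans n.le_succ)]

theorem zeroExtend_nilpotentJordanBlock_pow_mulVec (k : ℕ) (v : Fin M → R) (n : ℕ) :
    zeroExtend (nilpotentJordanBlock M R ^ k *ᵥ v) n = zeroExtend v (n + k) := by
  induction k generalizing n with
  | zero => simp
  | succ k ih =>
    rw [pow_succ', ← mulVec_mulVec, zeroExtend_nilpotentJordanBlock_mulVec, ih, add_right_comm,
      add_assoc]

theorem nilpotentJordanBlock_pow_mulVec_apply (k : ℕ) (v : Fin M → R) (p : Fin M) :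
    (nilpotentJordanBlock M R ^ k *ᵥ v) p = zeroExtend v (p + k) := by
  rw [← zeroExtend_val (_ *ᵥ v), zeroExtend_nilpotentJordanBlock_pow_mulVec]

end NilpotentJordanBlock

section Hankel

variable {M : ℕ} {R : Type*} [Semiring R]

/-- The Hankel-type matrix with entries `g (ℓ + p)`, read as `0` when `M ≤ ℓ + p`. Its type is that
of an `M`-tuple of vectors, its rows. -/
noncomputable def hankelMap : (Fin M → R) →ₗ[R] Fin M → Fin M → R :=
  LinearMap.pi fun ℓ ↦ LinearMap.funLeft R R (fun p : Fin M ↦ (ℓ + p : ℕ)) ∘ₗ zeroExtend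

theorem hankelMap_apply (g : Fin M → R) (ℓ p : Fin M) : hankelMap g ℓ p = zeroExtend g (ℓ + p) :=
  rfl

theorem hankelMap_injective : Function.Injective (hankelMap : (Fin M → R) → Fin M → Fin M → R) := by
  intro g g' h
  ext k
  simpa [hankelMap_apply] using congrFun (congrFun h ⟨0, k.pos⟩) k

/-- The sums `Σ_q f_{q, q+k}` along the diagonals of an `M`-tuple of vectors `f`, i.e. the sequence
generating the Hankel-type matrix `T f`. -/
noncomputable def diagonalSum (f : Fin M → Fin M → R) (k : Fin M) : R :=
  ∑ j : Fin M, zeroExtend (f j) (k + j)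

theorem zeroExtend_diagonalSum (f : Fin M → Fin M → R) (n : ℕ) :
    zeroExtend (diagonalSum f) n = ∑ j : Fin M, zeroExtend (f j) (n + j) := by
  obtain hn | hn := lt_or_ge n M
  · lift n to Fin M using hn
    rw [zeroExtend_val, diagonalSum]
  · rw [zeroExtend_of_le _ hn]
    exact (Finset.sum_eq_zero fun j _ ↦ zeroExtend_of_le _ (hn.trans le_self_add)).symm

theorem diagonalSum_surjective :
    Function.Surjective (diagonalSum : (Fin M → Fin M → R) → Fin M → R) := by
  intro g
  cases M with
  | zero => exact ⟨0, Subsingleton.elim _ _⟩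
  | succ m =>
    refine ⟨Fin.cons g 0, ?_⟩
    ext k
    simp [diagonalSum, Fin.sum_univ_succ]

theorem sum_nilpotentJordanBlock_pow_mulVec (f : Fin M → Fin M → R) (ℓ : Fin M) :
    ∑ j ∈ Finset.univ.filter (fun j : Fin M ↦ (ℓ + j : ℕ) < M),
        (nilpotentJordanBlock M R ^ (ℓ + j : ℕ)).mulVec (f j) =
      hankelMap (diagonalSum f) ℓ := by
  ext p
  have vanish (j : Fin M) (hj : ¬(ℓ + j : ℕ) < M) : zeroExtend (f j) (ℓ + p + j) = 0 :=
    zeroExtend_of_le _ (by lia)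
  calc
    _ = ∑ j ∈ Finset.univ.filter (fun j : Fin M ↦ (ℓ + j : ℕ) < M),
          zeroExtend (f j) (ℓ + p + j) := by
      simp only [Finset.sum_apply, nilpotentJordanBlock_pow_mulVec_apply, add_left_comm, add_assoc]
    _ = ∑ j : Fin M, zeroExtend (f j) (ℓ + p + j) :=
      Finset.sum_filter_of_ne fun j _ ↦ not_imp_comm.mp (vanish j)
    _ = hankelMap (diagonalSum f) ℓ p := by rw [hankelMap_apply, zeroExtend_diagonalSum]

end Hankel

theorem stmt_18_general {R : Type*} [Semiring R] [StrongRankCondition R] (M : ℕ)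
    (N : Matrix (Fin M) (Fin M) R)
    (hN : ∀ p q : Fin M, N p q = if (q : ℕ) = (p : ℕ) + 1 then 1 else 0)
    (T : (Fin M → Fin M → R) → (Fin M → Fin M → R))
    (hT : ∀ (f : Fin M → Fin M → R) (ℓ : Fin M),
      T f ℓ = ∑ j ∈ Finset.univ.filter (fun j : Fin M => (ℓ : ℕ) + (j : ℕ) < M),
        (N ^ ((ℓ : ℕ) + (j : ℕ))).mulVec (f j)) :
    Module.finrank R (Submodule.span R (Set.range T)) = M := by
  obtain rfl : N = nilpotentJordanBlock M R := Matrix.ext hN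
  have T_eq : T = hankelMap ∘ diagonalSum :=
    funext₂ fun f ℓ ↦ (hT f ℓ).trans (sum_nilpotentJordanBlock_pow_mulVec f ℓ)
  have range_T : Set.range T = LinearMap.range (hankelMap : (Fin M → R) →ₗ[R] _) := by
    rw [T_eq, diagonalSum_surjective.range_comp, LinearMap.coe_range]
  rw [range_T, Submodule.span_eq, LinearMap.finrank_range_of_inj hankelMap_injective,
    Module.finrank_fin_fun]

open Finset in
/-- Linear-algebra claim in the proof of Lemma 7.5: for the nilpotent `M × M` Jordan
block `N`, the map `T(f_0,…,f_{M-1})_ℓ = Σ_{j : ℓ+j ≤ M-1} N^{ℓ+j} f_j` on `M`-tuples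
of vectors in `ℂ^M` has image of dimension `M`. -/
theorem stmt_18 (M : ℕ) (hM : 1 ≤ M)
    (N : Matrix (Fin M) (Fin M) ℂ)
    (hN : ∀ p q : Fin M, N p q = if (q : ℕ) = (p : ℕ) + 1 then 1 else 0)
    (T : (Fin M → Fin M → ℂ) → (Fin M → Fin M → ℂ))
    (hT : ∀ (f : Fin M → Fin M → ℂ) (ℓ : Fin M),
      T f ℓ = ∑ j ∈ Finset.univ.filter (fun j : Fin M => (ℓ : ℕ) + (j : ℕ) < M),
        (N ^ ((ℓ : ℕ) + (j : ℕ))).mulVec (f j)) :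
    Module.finrank ℂ (Submodule.span ℂ (Set.range T)) = M :=
  stmt_18_general M N hN T hT
end
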